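/- arXiv:1905.07759 — 2 statements merged into one kernel-verified Lean document; each statement's English description precedes it below -/
import Mathlib

section
/- For N ≥ 2 and 1 < q ≤ N/(N-1), the constant Ẽ_q := sup over nonzero u in W^{1,1}(ℝ^N) of ‖u‖_q^q / (‖u‖_1^{q-(q-1)N} ‖∇u‖_1^{(q-1)N}) is not attained by any nonzero u ∈ W^{1,1}(ℝ^N). -/
open MeasureTheory Real Filter Topology

noncomputable section

abbrev Euc (N : ℕ) := EuclideanSpace ℝ (Fin N)

/-- The set of values `∫ u div ψ` over admissible test vector fields. -/
def TVSet (N : ℕ) (u : Euc N → ℝ) : Set ℝ :=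
  { r | ∃ ψ : Euc N → Euc N, ContDiff ℝ 1 ψ ∧ HasCompactSupport ψ ∧
      (∀ x, ‖ψ x‖ ≤ 1) ∧
      r = ∫ x, u x * (∑ i, fderiv ℝ (fun y => ψ y i) x (EuclideanSpace.single i 1)) }

/-- Total variation of `u`. -/
def tv (N : ℕ) (u : Euc N → ℝ) : ℝ := sSup (TVSet N u)

/-- `u` is a function of bounded variation on `ℝ^N`. -/
def MemBV (N : ℕ) (u : Euc N → ℝ) : Prop :=
  Integrable u ∧ BddAbove (TVSet N u)

/-- The `L¹` norm. -/
def nrm1 (N : ℕ) (u : Euc N → ℝ) : ℝ := (eLpNorm u 1 volume).toReal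

/-- The `L^q` norm, `q` a real exponent. -/
def nrmq (N : ℕ) (q : ℝ) (u : Euc N → ℝ) : ℝ :=
  (eLpNorm u (ENNReal.ofReal q) volume).toReal

/-- Surface area `ω_{N-1}` of the unit sphere in `ℝ^N`, as `N` times the
volume of the unit ball. -/
def omegaS (N : ℕ) : ℝ := N * (volume (Metric.ball (0 : Euc N) 1)).toReal

/-- The Gagliardo–Nirenberg ratio `‖u‖_q^q / (‖u‖_1^{q-(q-1)N} ‖u‖_{TV}^{(q-1)N})`. -/
def ratioQ (N : ℕ) (q : ℝ) (u : Euc N → ℝ) : ℝ :=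
  nrmq N q u ^ q / (nrm1 N u ^ (q - (q-1)*N) * tv N u ^ ((q-1)*(N:ℝ)))

/-- The best constant `E_q` on `BV(ℝ^N)`. -/
def EqSup (N : ℕ) (q : ℝ) : ℝ :=
  sSup { r | ∃ u : Euc N → ℝ, MemBV N u ∧ u ≠ 0 ∧ r = ratioQ N q u }

/-- `u ∈ W^{1,1}(ℝ^N)` with weak gradient `v`. -/
def MemW11 (N : ℕ) (u : Euc N → ℝ) (v : Euc N → Euc N) : Prop :=
  Integrable u ∧ Integrable v ∧
    ∀ ψ : Euc N → ℝ, ContDiff ℝ 1 ψ → HasCompactSupport ψ → ∀ i : Fin N,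
      ∫ x, u x * fderiv ℝ ψ x (EuclideanSpace.single i 1) = - ∫ x, v x i * ψ x

/-- The Gagliardo–Nirenberg ratio on `W^{1,1}`, with `‖∇u‖_1` in place of `‖u‖_{TV}`. -/
def ratioQW (N : ℕ) (q : ℝ) (u : Euc N → ℝ) (v : Euc N → Euc N) : ℝ :=
  nrmq N q u ^ q /
    (nrm1 N u ^ (q - (q-1)*N) * ((eLpNorm v 1 volume).toReal) ^ ((q-1)*(N:ℝ)))

/-- The best constant `Ẽ_q` on `W^{1,1}(ℝ^N)`. -/
def EqSupW (N : ℕ) (q : ℝ) : ℝ :=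
  sSup { r | ∃ u : Euc N → ℝ, ∃ v : Euc N → Euc N,
      MemW11 N u v ∧ u ≠ 0 ∧ r = ratioQW N q u v }


open scoped Convolution

/-- The shrinking bump functions used for mollification. -/
def bmp (N : ℕ) (n : ℕ) : ContDiffBump (0 : Euc N) where
  rIn := 1 / ((n : ℝ) + 1)
  rOut := 2 / ((n : ℝ) + 1)
  rIn_pos := by positivity
  rIn_lt_rOut := by gcongr; norm_num

/-- Mollification. -/
def mol {N : ℕ} {F : Type} [NormedAddCommGroup F] [NormedSpace ℝ F] (n : ℕ) (f : Euc N → F) :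
    Euc N → F :=
  (bmp N n).normed volume ⋆[ContinuousLinearMap.lsmul ℝ ℝ, volume] f

section molsec
variable {N : ℕ} {F : Type} [NormedAddCommGroup F] [NormedSpace ℝ F] [CompleteSpace F]

lemma mol_ae {f : Euc N → F} (hf : Integrable f) :
    ∀ᵐ x, Tendsto (fun n => mol n f x) atTop (𝓝 (f x)) := by
  refine ContDiffBump.ae_convolution_tendsto_right_of_locallyIntegrable (K := 2)
    (φ := bmp N) ?_ ?_ hf.locallyIntegrable
  · have := (tendsto_one_div_add_atTop_nhds_zero_nat (𝕜 := ℝ)).const_mul 2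
    simpa [bmp, div_eq_mul_inv] using this
  · refine Eventually.of_forall fun n => ?_
    simp only [bmp]
    apply le_of_eq; ring

lemma rho_integrable (n : ℕ) : Integrable ((bmp N n).normed volume) :=
  (bmp N n).integrable_normed

lemma mol_integrable {f : Euc N → F} (hf : Integrable f) (n : ℕ) : Integrable (mol n f) :=
  (rho_integrable n).integrable_convolution _ hf

lemma mol_norm_le {f : Euc N → F} (hf : Integrable f) (n : ℕ) :
    ∫ x, ‖mol n f x‖ ≤ ∫ x, ‖f x‖ := by
  have h1 : ∫ x, mol n (fun y => ‖f y‖) x = ∫ x, ‖f x‖ := by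
    unfold mol
    rw [integral_convolution _ (rho_integrable n) hf.norm]
    simp [ContDiffBump.integral_normed]
  rw [← h1]
  refine integral_mono (mol_integrable hf n).norm (mol_integrable hf.norm n) fun x => ?_
  unfold mol convolution
  refine (norm_integral_le_integral_norm _).trans (le_of_eq ?_)
  congr 1; ext t
  simp [norm_smul, abs_of_nonneg ((bmp N n).nonneg_normed t)]

lemma mol_L1 {f : Euc N → F} (hf : Integrable f) :
    Tendsto (fun n => ∫ x, ‖mol n f x - f x‖) atTop (𝓝 0) := by
  have hm := fun n => mol_integrable hf n
  have h : Tendsto (fun n => ∫ x, (‖mol n f x - f x‖ - ‖mol n f x‖ + ‖f x‖)) atTop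
      (𝓝 (∫ x : Euc N, (0 : ℝ))) := by
    refine tendsto_integral_of_dominated_convergence (fun x => 2 * ‖f x‖) ?_ (hf.norm.const_mul 2)
      ?_ ?_
    · intro n
      exact ((((hm n).sub hf).norm.sub (hm n).norm).add hf.norm).aestronglyMeasurable
    · intro n
      refine Eventually.of_forall fun x => ?_
      have h1 := norm_sub_le (mol n f x) (f x)
      have h2 := norm_sub_norm_le (mol n f x) (f x)
      rw [Real.norm_eq_abs, abs_le]
      constructor <;> nlinarith [norm_nonneg (f x)]
    · filter_upwards [mol_ae hf] with x hx
      have := ((hx.sub_const (f x)).norm.sub hx.norm).add_const ‖f x‖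
      simpa using this
  simp only [integral_zero] at h
  refine squeeze_zero (fun n => integral_nonneg fun x => norm_nonneg _) (fun n => ?_) h
  have h1 : Integrable (fun x => ‖mol n f x - f x‖) := ((hm n).sub hf).norm
  have h2 : Integrable (fun x => ‖mol n f x - f x‖ - ‖mol n f x‖) := h1.sub (hm n).norm
  rw [integral_add h2 hf.norm, integral_sub h1 (hm n).norm]
  have := mol_norm_le hf n
  linarith

end molsec

lemma mol_contDiff {N : ℕ} {u : Euc N → ℝ} (hu : Integrable u) (n : ℕ) :
    ContDiff ℝ 1 (mol n u) :=
  HasCompactSupport.contDiff_convolution_left _ (bmp N n).hasCompactSupport_normed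
    ((bmp N n).contDiff_normed) hu.locallyIntegrable

lemma mol_hasFDerivAt {N : ℕ} {u : Euc N → ℝ} {v : Euc N → Euc N} (h : MemW11 N u v) (n : ℕ)
    (x : Euc N) : HasFDerivAt (mol n u) (innerSL ℝ (mol n v x)) x := by
  obtain ⟨hu, hv, hw⟩ := h
  set ρ := (bmp N n).normed (volume : Measure (Euc N)) with hρ
  have hρc : HasCompactSupport ρ := (bmp N n).hasCompactSupport_normed
  have hρd : ContDiff ℝ 1 ρ := (bmp N n).contDiff_normed
  have key := HasCompactSupport.hasFDerivAt_convolution_left (μ := volume)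
    (ContinuousLinearMap.lsmul ℝ ℝ) hρc hρd hu.locallyIntegrable x
  suffices hE : innerSL ℝ (mol n v x) = (fderiv ℝ ρ ⋆[(ContinuousLinearMap.lsmul ℝ ℝ :
      ℝ →L[ℝ] ℝ →L[ℝ] ℝ).precompL (Euc N), volume] u) x by
    rw [hE]; exact key
  have hex : ConvolutionExistsAt (fderiv ℝ ρ) u x
      ((ContinuousLinearMap.lsmul ℝ ℝ : ℝ →L[ℝ] ℝ →L[ℝ] ℝ).precompL (Euc N)) volume :=
    (hρc.fderiv ℝ).convolutionExists_left _ (hρd.continuous_fderiv one_ne_zero)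
      hu.locallyIntegrable x
  have hex2 : ConvolutionExistsAt ρ v x (ContinuousLinearMap.lsmul ℝ ℝ) volume :=
    hρc.convolutionExists_left _ hρd.continuous hv.locallyIntegrable x
  apply ContinuousLinearMap.coe_injective
  refine (EuclideanSpace.basisFun (Fin N) ℝ).toBasis.ext fun i => ?_
  simp only [OrthonormalBasis.coe_toBasis, EuclideanSpace.basisFun_apply,
    ContinuousLinearMap.coe_coe, innerSL_apply_apply, EuclideanSpace.inner_single_right]
  have hL : (mol n v x) i = ∫ t, v t i * ρ (x - t) := by
    have : (mol n v x) i = ∫ t, ρ t * (v (x - t)) i := by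
      unfold mol convolution
      have := (EuclideanSpace.proj (𝕜 := ℝ) i : Euc N →L[ℝ] ℝ).integral_comp_comm hex2
      simpa using this.symm
    rw [this, ← integral_sub_left_eq_self _ volume x]
    congr 1; ext t; simp [mul_comm]
  have hR : ((fderiv ℝ ρ ⋆[(ContinuousLinearMap.lsmul ℝ ℝ : ℝ →L[ℝ] ℝ →L[ℝ] ℝ).precompL (Euc N),
      volume] u) x) (EuclideanSpace.single i 1)
      = ∫ t, u t * fderiv ℝ ρ (x - t) (EuclideanSpace.single i 1) := by
    unfold convolution
    rw [ContinuousLinearMap.integral_apply hex, ← integral_sub_left_eq_self _ volume x]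
    congr 1; ext t
    simp [ContinuousLinearMap.precompL_apply, mul_comm]
  rw [hR]
  have hψd : ContDiff ℝ 1 (fun t => ρ (x - t)) := hρd.comp (contDiff_const.sub contDiff_id)
  have hψc : HasCompactSupport (fun t => ρ (x - t)) :=
    hρc.comp_homeomorph (Homeomorph.subLeft x)
  have := hw _ hψd hψc i
  have hd : ∀ t, fderiv ℝ (fun t => ρ (x - t)) t (EuclideanSpace.single i 1)
      = - fderiv ℝ ρ (x - t) (EuclideanSpace.single i 1) := by
    intro t
    have h1 : HasFDerivAt (fun t => ρ (x - t)) _ t :=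
      ((hρd.differentiable one_ne_zero) (x - t)).hasFDerivAt.comp t
        ((hasFDerivAt_id t).const_sub x)
    rw [h1.fderiv]; simp
  simp only [hd, mul_neg, integral_neg, neg_inj] at this
  rw [this, ← hL]; simp


lemma tendsto_int_of_bound {α : Type} [MeasurableSpace α] {μ : Measure α} {A : ℕ → α → ℝ}
    {A' : α → ℝ} {B : ℕ → α → ℝ} (hA : ∀ n, Integrable (A n) μ) (hA' : Integrable A' μ)
    (hB : ∀ n, Integrable (B n) μ) (h : ∀ n x, |A n x - A' x| ≤ B n x)
    (hlim : Tendsto (fun n => ∫ x, B n x ∂μ) atTop (𝓝 0)) :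
    Tendsto (fun n => ∫ x, A n x ∂μ) atTop (𝓝 (∫ x, A' x ∂μ)) := by
  rw [tendsto_iff_norm_sub_tendsto_zero]
  refine squeeze_zero (fun n => norm_nonneg _) (fun n => ?_) hlim
  rw [← integral_sub (hA n) hA']
  refine (norm_integral_le_integral_norm _).trans ?_
  exact integral_mono ((hA n).sub hA').norm (hB n) (h n)

lemma test_bound {N : ℕ} {ψ : Euc N → ℝ} (hψ : ContDiff ℝ 1 ψ) (hc : HasCompactSupport ψ)
    (e : Euc N) : ∃ K, 0 ≤ K ∧ (∀ x, |ψ x| ≤ K) ∧ (∀ x, |fderiv ℝ ψ x e| ≤ K) := by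
  obtain ⟨a, ha⟩ := hc.exists_bound_of_continuous hψ.continuous
  obtain ⟨b, hb⟩ := (hc.fderiv_apply ℝ e).exists_bound_of_continuous
    ((hψ.continuous_fderiv one_ne_zero).clm_apply continuous_const)
  refine ⟨max a b, ?_, fun x => (ha x).trans (le_max_left _ _),
    fun x => (hb x).trans (le_max_right _ _)⟩
  exact (norm_nonneg (ψ 0)).trans ((ha 0).trans (le_max_left _ _))

lemma coord_le {N : ℕ} (x : Euc N) (i : Fin N) : |x i| ≤ ‖x‖ := PiLp.norm_apply_le x i

lemma coord_int {N : ℕ} {v : Euc N → Euc N} (hv : Integrable v) (i : Fin N) :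
    Integrable (fun x => v x i) :=
  (EuclideanSpace.proj (𝕜 := ℝ) i : Euc N →L[ℝ] ℝ).integrable_comp hv

lemma int_mul_test {N : ℕ} {f : Euc N → ℝ} (hf : Integrable f) {ψ : Euc N → ℝ}
    (hψ : Continuous ψ) {K : ℝ} (hK : ∀ x, |ψ x| ≤ K) : Integrable (fun x => f x * ψ x) :=
  hf.mul_bdd (c := K) hψ.aestronglyMeasurable (Eventually.of_forall hK)

section chain
variable {g : ℝ → ℝ}

lemma prim_hasDeriv (hg : Continuous g) (x : ℝ) :
    HasDerivAt (fun y => ∫ t in (0:ℝ)..y, g t) (g x) x :=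
  intervalIntegral.integral_hasDerivAt_right (hg.intervalIntegrable _ _)
    (hg.stronglyMeasurableAtFilter _ _) hg.continuousAt

lemma prim_lip (hg : Continuous g) (hb : ∀ t, |g t| ≤ 1) (x y : ℝ) :
    |(∫ t in (0:ℝ)..x, g t) - ∫ t in (0:ℝ)..y, g t| ≤ |x - y| := by
  rw [intervalIntegral.integral_interval_sub_left (hg.intervalIntegrable _ _)
    (hg.intervalIntegrable _ _)]
  have := intervalIntegral.norm_integral_le_of_norm_le_const (a := y) (b := x) (f := g) (C := 1)
    (fun t _ => hb t)
  simpa using this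

lemma chain_rule {N : ℕ} {u : Euc N → ℝ} {v : Euc N → Euc N} (h : MemW11 N u v)
    (hg : Continuous g) (hb : ∀ t, |g t| ≤ 1) :
    MemW11 N (fun x => ∫ t in (0:ℝ)..(u x), g t) (fun x => g (u x) • v x) := by
  set Φ : ℝ → ℝ := fun y => ∫ t in (0:ℝ)..y, g t with hΦ
  have hΦd : ∀ x, HasDerivAt Φ (g x) x := prim_hasDeriv hg
  have hΦl : ∀ x y, |Φ x - Φ y| ≤ |x - y| := prim_lip hg hb
  have hΦ0 : Φ 0 = 0 := by simp [hΦ]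
  have hΦb : ∀ x, |Φ x| ≤ |x| := fun x => by simpa [hΦ0] using hΦl x 0
  have hΦc : ContDiff ℝ 1 Φ := by
    rw [contDiff_one_iff_deriv]
    refine ⟨fun x => (hΦd x).differentiableAt, ?_⟩
    have : deriv Φ = g := funext fun x => (hΦd x).deriv
    rwa [this]
  have h' := h
  obtain ⟨hu, hv, -⟩ := h'
  have intΦ : ∀ {w : Euc N → ℝ}, Integrable w → Integrable (fun x => Φ (w x)) := fun {w} hw =>
    hw.mono (hΦc.continuous.comp_aestronglyMeasurable hw.aestronglyMeasurable)
      (Eventually.of_forall fun x => hΦb _)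
  have intg : ∀ {w : Euc N → ℝ} {z : Euc N → Euc N}, Integrable w → Integrable z →
      Integrable (fun x => g (w x) • z x) := fun {w z} hw hz =>
    hz.bdd_smul 1 (hg.comp_aestronglyMeasurable hw.aestronglyMeasurable)
      (Eventually.of_forall fun x => hb _)
  refine ⟨intΦ hu, intg hu hv, fun ψ hψ hc i => ?_⟩
  obtain ⟨K, hK0, hK1, hK2⟩ := test_bound hψ hc (EuclideanSpace.single i 1)
  have hdc : Continuous (fun x => fderiv ℝ ψ x (EuclideanSpace.single i 1)) :=
    (hψ.continuous_fderiv one_ne_zero).clm_apply continuous_const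
  have hmu := fun n => mol_integrable hu n
  have hmv := fun n => mol_integrable hv n
  -- integration by parts for the mollifications
  have ibp : ∀ n, ∫ x, Φ (mol n u x) * fderiv ℝ ψ x (EuclideanSpace.single i 1)
      = - ∫ x, (g (mol n u x) • mol n v x) i * ψ x := by
    intro n
    have hd : ∀ x, HasFDerivAt (fun x => Φ (mol n u x)) (g (mol n u x) • innerSL ℝ (mol n v x)) x :=
      fun x => (hΦd _).comp_hasFDerivAt x (mol_hasFDerivAt h n x)
    have hd' : ∀ x, fderiv ℝ (fun x => Φ (mol n u x)) x (EuclideanSpace.single i 1)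
        = (g (mol n u x) • mol n v x) i := by
      intro x
      rw [(hd x).fderiv]
      simp [EuclideanSpace.inner_single_right]
    have := integral_mul_fderiv_eq_neg_fderiv_mul_of_integrable (μ := volume)
      (f := fun x => Φ (mol n u x)) (g := ψ) (v := EuclideanSpace.single i 1)
      (by simp only [hd']
          exact int_mul_test (coord_int (intg (hmu n) (hmv n)) i) hψ.continuous hK1)
      (int_mul_test (intΦ (hmu n)) hdc hK2) (int_mul_test (intΦ (hmu n)) hψ.continuous hK1)
      (fun x _ => (hd x).differentiableAt) (fun x _ => hψ.differentiable one_ne_zero x)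
    simp only [hd'] at this
    exact this
  have l1 : Tendsto (fun n => ∫ x, Φ (mol n u x) * fderiv ℝ ψ x (EuclideanSpace.single i 1)) atTop
      (𝓝 (∫ x, Φ (u x) * fderiv ℝ ψ x (EuclideanSpace.single i 1))) := by
    refine tendsto_int_of_bound (B := fun n x => ‖mol n u x - u x‖ * K)
      (fun n => int_mul_test (intΦ (hmu n)) hdc hK2)
      (int_mul_test (intΦ hu) hdc hK2) (fun n => ((hmu n).sub hu).norm.mul_const K) ?_ ?_
    · intro n x
      rw [← sub_mul, abs_mul]
      exact mul_le_mul (hΦl _ _) (hK2 x) (abs_nonneg _) (norm_nonneg _)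
    · simp only [integral_mul_const]
      simpa using (mol_L1 hu).mul_const K
  have l2 : Tendsto (fun n => ∫ x, (g (mol n u x) • mol n v x) i * ψ x) atTop
      (𝓝 (∫ x, (g (u x) • v x) i * ψ x)) := by
    have hI : ∀ n, Integrable (fun x => |g (mol n u x) - g (u x)| * ‖v x‖) := by
      intro n
      refine hv.norm.bdd_mul (c := 2) ?_ (Eventually.of_forall fun x => ?_)
      · exact ((hg.comp_aestronglyMeasurable (hmu n).aestronglyMeasurable).sub
          (hg.comp_aestronglyMeasurable hu.aestronglyMeasurable)).norm
      · rw [Real.norm_eq_abs, abs_abs]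
        have := abs_sub (g (mol n u x)) (g (u x))
        linarith [hb (mol n u x), hb (u x)]
    refine tendsto_int_of_bound
      (B := fun n x => (‖mol n v x - v x‖ + |g (mol n u x) - g (u x)| * ‖v x‖) * K)
      (fun n => int_mul_test (coord_int (intg (hmu n) (hmv n)) i) hψ.continuous hK1)
      (int_mul_test (coord_int (intg hu hv) i) hψ.continuous hK1)
      (fun n => (((hmv n).sub hv).norm.add (hI n)).mul_const K) ?_ ?_
    · intro n x
      rw [← sub_mul, abs_mul]
      refine mul_le_mul ?_ (hK1 x) (abs_nonneg _) (by positivity)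
      have e : (g (mol n u x) • mol n v x) i - (g (u x) • v x) i
          = g (mol n u x) * (mol n v x - v x) i + (g (mol n u x) - g (u x)) * v x i := by
        simp; ring
      rw [e]
      refine (abs_add_le _ _).trans ?_
      rw [abs_mul, abs_mul]
      gcongr
      · calc _ ≤ 1 * ‖mol n v x - v x‖ := mul_le_mul (hb _) (coord_le _ _) (abs_nonneg _) one_pos.le
          _ = _ := one_mul _
      · exact coord_le _ _
    · simp only [integral_mul_const]
      have t2 : Tendsto (fun n => ∫ x, |g (mol n u x) - g (u x)| * ‖v x‖) atTop
          (𝓝 (∫ x : Euc N, (0:ℝ))) := by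
        refine tendsto_integral_of_dominated_convergence (fun x => 2 * ‖v x‖)
          (fun n => (hI n).aestronglyMeasurable) (hv.norm.const_mul 2) ?_ ?_
        · intro n
          refine Eventually.of_forall fun x => ?_
          rw [norm_mul, Real.norm_eq_abs, abs_abs, norm_norm]
          gcongr
          have := abs_sub (g (mol n u x)) (g (u x))
          linarith [hb (mol n u x), hb (u x)]
        · filter_upwards [mol_ae hu] with x hx
          have := ((((hg.tendsto _).comp hx).sub_const (g (u x))).abs).mul_const ‖v x‖
          simpa using this
      have t1 := mol_L1 hv
      have : ∀ n, ∫ x, (‖mol n v x - v x‖ + |g (mol n u x) - g (u x)| * ‖v x‖)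
          = (∫ x, ‖mol n v x - v x‖) + ∫ x, |g (mol n u x) - g (u x)| * ‖v x‖ :=
        fun n => integral_add ((hmv n).sub hv).norm (hI n)
      simp only [this]
      simpa using (t1.add t2).mul_const K
  simp only [ibp] at l1
  exact tendsto_nhds_unique l1 l2.neg

end chain

lemma MemW11.smul {N : ℕ} {u : Euc N → ℝ} {v : Euc N → Euc N} (h : MemW11 N u v) (c : ℝ) :
    MemW11 N (fun x => c * u x) (fun x => c • v x) := by
  obtain ⟨hu, hv, hw⟩ := h
  refine ⟨hu.const_mul c, hv.smul c, fun ψ hψ hc i => ?_⟩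
  have := hw ψ hψ hc i
  simp only [PiLp.smul_apply, smul_eq_mul, mul_assoc, integral_const_mul, this]
  ring

lemma MemW11.sub {N : ℕ} {u u' : Euc N → ℝ} {v v' : Euc N → Euc N} (h : MemW11 N u v)
    (h' : MemW11 N u' v') : MemW11 N (fun x => u x - u' x) (fun x => v x - v' x) := by
  obtain ⟨hu, hv, hw⟩ := h
  obtain ⟨hu', hv', hw'⟩ := h'
  refine ⟨hu.sub hu', hv.sub hv', fun ψ hψ hc i => ?_⟩
  obtain ⟨K, hK0, hK1, hK2⟩ := test_bound hψ hc (EuclideanSpace.single i 1)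
  have hdc : Continuous (fun x => fderiv ℝ ψ x (EuclideanSpace.single i 1)) :=
    (hψ.continuous_fderiv one_ne_zero).clm_apply continuous_const
  simp only [PiLp.sub_apply, sub_mul]
  rw [integral_sub (int_mul_test hu hdc hK2) (int_mul_test hu' hdc hK2),
    integral_sub (int_mul_test (coord_int hv i) hψ.continuous hK1)
      (int_mul_test (coord_int hv' i) hψ.continuous hK1), hw ψ hψ hc i, hw' ψ hψ hc i]
  ring

/-- Weak gradient of a function vanishing a.e. -/
lemma MemW11.grad_zero {N : ℕ} {u : Euc N → ℝ} {v : Euc N → Euc N} (h : MemW11 N u v)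
    (h0 : ∀ᵐ x, u x = 0) : ∀ᵐ x, v x = 0 := by
  obtain ⟨hu, hv, hw⟩ := h
  have : ∀ i, ∀ᵐ x, v x i = 0 := by
    intro i
    refine ae_eq_zero_of_integral_contDiff_smul_eq_zero (coord_int hv i).locallyIntegrable ?_
    intro g hg hc
    have h1 := hw g (hg.of_le (by exact_mod_cast le_top)) hc i
    have h2 : ∫ x, u x * fderiv ℝ g x (EuclideanSpace.single i 1) = 0 := by
      rw [integral_eq_zero_of_ae]
      filter_upwards [h0] with x hx
      simp [hx]
    rw [h2] at h1
    simp only [smul_eq_mul, mul_comm (g _)]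
    linarith
  filter_upwards [ae_all_iff.2 this] with x hx
  ext i; simpa using hx i

/-- the approximating slopes -/
def slope1 (s : ℝ) (n : ℕ) (t : ℝ) : ℝ := min 1 (max 0 ((n : ℝ) * (t - s)))

lemma slope1_cont (s : ℝ) (n : ℕ) : Continuous (slope1 s n) := by
  unfold slope1; fun_prop

lemma slope1_abs (s : ℝ) (n : ℕ) (t : ℝ) : |slope1 s n t| ≤ 1 := by
  unfold slope1
  rw [abs_of_nonneg (le_min zero_le_one (le_max_left _ _))]
  exact min_le_left _ _

lemma slope1_tendsto (s t : ℝ) :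
    Tendsto (fun n => slope1 s n t) atTop (𝓝 ((Set.Ioi s).indicator (fun _ => (1:ℝ)) t)) := by
  by_cases h : s < t
  · rw [Set.indicator_of_mem (by exact h)]
    refine tendsto_const_nhds.congr' ?_
    have := (tendsto_natCast_atTop_atTop (R := ℝ)).atTop_mul_const (sub_pos.2 h)
    filter_upwards [this.eventually_ge_atTop 1] with n hn
    unfold slope1
    rw [min_eq_left (hn.trans (le_max_right _ _))]
  · rw [Set.indicator_of_notMem (by exact h)]
    refine tendsto_const_nhds.congr' (Eventually.of_forall fun n => ?_)
    simp only [slope1]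
    have h' : t - s ≤ 0 := by linarith [not_lt.1 h]
    rw [max_eq_left (mul_nonpos_of_nonneg_of_nonpos (Nat.cast_nonneg n) h')]
    simp

lemma prim_indicator {s : ℝ} (hs : 0 ≤ s) (x : ℝ) :
    ∫ t in (0:ℝ)..x, (Set.Ioi s).indicator (fun _ => (1:ℝ)) t = max (x - s) 0 := by
  by_cases h : x ≤ s
  · rw [max_eq_right (by linarith), intervalIntegral.integral_zero_ae]
    refine Eventually.of_forall fun t ht => Set.indicator_of_notMem ?_ _
    have : t ≤ max 0 x := (Set.mem_uIoc.1 ht).elim (fun h => h.2.trans (le_max_right _ _))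
      (fun h => h.2.trans (le_max_left _ _))
    simp only [Set.mem_Ioi, not_lt]
    exact this.trans (max_le hs h)
  · push Not at h
    rw [max_eq_left (by linarith)]
    have hx0 : 0 ≤ x := by linarith
    rw [intervalIntegral.integral_of_le hx0, setIntegral_indicator measurableSet_Ioi]
    have : Set.Ioc 0 x ∩ Set.Ioi s = Set.Ioc s x := by
      ext t; simp only [Set.mem_inter_iff, Set.mem_Ioc, Set.mem_Ioi]
      constructor
      · rintro ⟨⟨_, b⟩, c⟩; exact ⟨c, b⟩
      · rintro ⟨a, b⟩; exact ⟨⟨by linarith, b⟩, a⟩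
    rw [this]; simp [h.le]

lemma trunc {N : ℕ} {u : Euc N → ℝ} {v : Euc N → Euc N} (h : MemW11 N u v) {s : ℝ} (hs : 0 ≤ s) :
    MemW11 N (fun x => max (u x - s) 0)
      (fun x => (Set.Ioi s).indicator (fun _ => (1:ℝ)) (u x) • v x) := by
  have hn := fun n => chain_rule h (slope1_cont s n) (slope1_abs s n)
  have hu := h.1
  have hv := h.2.1
  have hI1 : Integrable (fun x => max (u x - s) 0) := by
    refine hu.mono ((hu.aestronglyMeasurable.sub aestronglyMeasurable_const).sup
      aestronglyMeasurable_const) (Eventually.of_forall fun x => ?_)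
    rw [Real.norm_eq_abs, Real.norm_eq_abs, abs_of_nonneg (le_max_right _ _)]
    exact max_le (by linarith [le_abs_self (u x)]) (abs_nonneg _)
  have hI2 : Integrable (fun x => (Set.Ioi s).indicator (fun _ => (1:ℝ)) (u x) • v x) := by
    refine hv.bdd_smul (𝕜 := ℝ) 1 ?_ (Eventually.of_forall fun x => ?_)
    · exact ((measurable_const.indicator measurableSet_Ioi).comp_aemeasurable
        hu.aemeasurable).aestronglyMeasurable
    · simp only [Set.indicator]; split_ifs <;> simp
  refine ⟨hI1, hI2, fun ψ hψ hc i => ?_⟩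
  obtain ⟨K, hK0, hK1, hK2⟩ := test_bound hψ hc (EuclideanSpace.single i 1)
  have hdc : Continuous (fun x => fderiv ℝ ψ x (EuclideanSpace.single i 1)) :=
    (hψ.continuous_fderiv one_ne_zero).clm_apply continuous_const
  have l1 : Tendsto (fun n => ∫ x, (∫ t in (0:ℝ)..(u x), slope1 s n t) *
      fderiv ℝ ψ x (EuclideanSpace.single i 1)) atTop
      (𝓝 (∫ x, max (u x - s) 0 * fderiv ℝ ψ x (EuclideanSpace.single i 1))) := by
    refine tendsto_integral_of_dominated_convergence (fun x => ‖u x‖ * K)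
      (fun n => (int_mul_test (hn n).1 hdc hK2).aestronglyMeasurable) (hu.norm.mul_const K)
      (fun n => Eventually.of_forall fun x => ?_) (Eventually.of_forall fun x => ?_)
    · rw [norm_mul]
      refine mul_le_mul ?_ (hK2 x) (norm_nonneg _) (norm_nonneg _)
      have := prim_lip (slope1_cont s n) (slope1_abs s n) (u x) 0
      simpa using this
    · refine Tendsto.mul_const _ ?_
      rw [← prim_indicator hs]
      refine intervalIntegral.tendsto_integral_filter_of_dominated_convergence (fun _ => 1)
        (Eventually.of_forall fun n => (slope1_cont s n).aestronglyMeasurable)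
        (Eventually.of_forall fun n => Eventually.of_forall fun t _ => slope1_abs s n t) (by simp)
        (Eventually.of_forall fun t _ => slope1_tendsto s t)
  have l2 : Tendsto (fun n => ∫ x, (slope1 s n (u x) • v x) i * ψ x) atTop
      (𝓝 (∫ x, ((Set.Ioi s).indicator (fun _ => (1:ℝ)) (u x) • v x) i * ψ x)) := by
    refine tendsto_integral_of_dominated_convergence (fun x => ‖v x‖ * K)
      (fun n => (int_mul_test (coord_int (hn n).2.1 i) hψ.continuous hK1).aestronglyMeasurable)
      (hv.norm.mul_const K)
      (fun n => Eventually.of_forall fun x => ?_) (Eventually.of_forall fun x => ?_)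
    · rw [norm_mul]
      refine mul_le_mul ?_ (hK1 x) (norm_nonneg _) (norm_nonneg _)
      simp only [PiLp.smul_apply, smul_eq_mul, norm_mul]
      calc _ ≤ 1 * ‖v x‖ := mul_le_mul (slope1_abs _ _ _) (coord_le _ _) (abs_nonneg _) one_pos.le
        _ = _ := one_mul _
    · simp only [PiLp.smul_apply, smul_eq_mul]
      exact ((slope1_tendsto s (u x)).mul_const _).mul_const _
  simp only [fun n => (hn n).2.2 ψ hψ hc i] at l1
  exact tendsto_nhds_unique l1 l2.neg

open scoped ENNReal NNReal

/-- fixed cutoff -/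
def cut (N : ℕ) : ContDiffBump (0 : Euc N) where
  rIn := 1
  rOut := 2
  rIn_pos := one_pos
  rIn_lt_rOut := by norm_num

lemma cut_bound (N : ℕ) : ∃ M : ℝ, 0 ≤ M ∧ ∀ x, ‖fderiv ℝ (cut N) x‖ ≤ M := by
  have hc : HasCompactSupport (cut N) := (cut N).hasCompactSupport
  have hd : ContDiff ℝ 1 (cut N) := (cut N).contDiff
  obtain ⟨a, ha⟩ := (hc.fderiv ℝ).exists_bound_of_continuous
    (hd.continuous_fderiv one_ne_zero)
  exact ⟨a, (norm_nonneg _).trans (ha 0), ha⟩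

lemma gns {N : ℕ} (hN : 2 ≤ N) : ∃ C : ℝ≥0∞, C ≠ ⊤ ∧ ∀ (u : Euc N → ℝ) (v : Euc N → Euc N),
    MemW11 N u v → ∫⁻ x, ‖u x‖ₑ ^ ((N:ℝ) / ((N:ℝ) - 1)) ≤
      C * (ENNReal.ofReal (∫ x, ‖v x‖)) ^ ((N:ℝ) / ((N:ℝ) - 1)) := by
  have hN' : (2:ℝ) ≤ N := by exact_mod_cast hN
  set p : ℝ := (N:ℝ) / ((N:ℝ) - 1) with hp
  have hp0 : 0 < p := div_pos (by linarith) (by linarith)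
  have hconj : Real.HolderConjugate (Module.finrank ℝ (Euc N)) p := by
    rw [finrank_euclideanSpace_fin]
    exact Real.HolderConjugate.conjExponent (by linarith)
  refine ⟨lintegralPowLePowLIntegralFDerivConst (volume : Measure (Euc N)) p,
    ENNReal.coe_ne_top, fun u v h => ?_⟩
  set C : ℝ≥0∞ := (lintegralPowLePowLIntegralFDerivConst (volume : Measure (Euc N)) p : ℝ≥0∞)
  have hu := h.1
  have hv := h.2.1
  obtain ⟨M, hM0, hM⟩ := cut_bound N
  set χ : ℕ → Euc N → ℝ := fun n x => cut N (((n:ℝ) + 1)⁻¹ • x) with hχ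
  have hχd : ∀ n, ContDiff ℝ 1 (χ n) := fun n =>
    (cut N).contDiff.comp (contDiff_const_smul _)
  have hχc : ∀ n, HasCompactSupport (χ n) := fun n =>
    (cut N).hasCompactSupport.comp_smul (by positivity)
  have hχf : ∀ n x, ‖fderiv ℝ (χ n) x‖ ≤ ((n:ℝ) + 1)⁻¹ * M := by
    intro n x
    have h1 : HasFDerivAt (χ n) _ x :=
      ((((cut N).contDiff (n := 1)).differentiable one_ne_zero)
        (((n:ℝ) + 1)⁻¹ • x)).hasFDerivAt.comp x ((hasFDerivAt_id x).const_smul (((n:ℝ) + 1)⁻¹))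
    rw [h1.fderiv, ContinuousLinearMap.comp_smul, ContinuousLinearMap.comp_id, norm_smul,
      Real.norm_of_nonneg (by positivity)]
    gcongr
    exact hM _
  have hχb : ∀ n x, |χ n x| ≤ 1 := fun n x => by
    rw [abs_of_nonneg (cut N).nonneg]; exact (cut N).le_one
  have hχl : ∀ x, Tendsto (fun n => χ n x) atTop (𝓝 1) := by
    intro x
    have h0 : Tendsto (fun n : ℕ => ((n:ℝ) + 1)⁻¹ • x) atTop (𝓝 0) := by
      have := (tendsto_one_div_add_atTop_nhds_zero_nat (𝕜 := ℝ)).smul_const x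
      simpa using this
    have h1 := ((cut N).continuous.tendsto 0).comp h0
    have h2 : cut N 0 = 1 := (cut N).one_of_mem_closedBall (by simp [cut])
    rw [h2] at h1; exact h1
  set w : ℕ → Euc N → ℝ := fun n x => χ n x * mol n u x with hw
  have hwd : ∀ n, ContDiff ℝ 1 (w n) := fun n => (hχd n).mul (mol_contDiff hu n)
  have hwc : ∀ n, HasCompactSupport (w n) := fun n => (hχc n).mul_right
  have hwl : ∀ᵐ x, Tendsto (fun n => w n x) atTop (𝓝 (u x)) := by
    filter_upwards [mol_ae hu] with x hx
    simpa using (hχl x).mul hx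
  have hwf : ∀ n x, ‖fderiv ℝ (w n) x‖ ≤ ‖mol n v x‖ + ((n:ℝ) + 1)⁻¹ * M * ‖mol n u x‖ := by
    intro n x
    have h1 := (((hχd n).differentiable one_ne_zero) x).hasFDerivAt.mul (mol_hasFDerivAt h n x)
    have h2 : fderiv ℝ (w n) x = _ := HasFDerivAt.fderiv h1
    rw [h2]
    refine (norm_add_le _ _).trans ?_
    rw [norm_smul, norm_smul, innerSL_apply_norm, mul_comm ‖mol n u x‖]
    gcongr
    · exact mul_le_of_le_one_left (norm_nonneg _) (hχb n x)
    · exact hχf n x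
  set R : ℕ → ℝ := fun n => (∫ x, ‖v x‖) + ((n:ℝ) + 1)⁻¹ * M * ∫ x, ‖u x‖ with hR
  have hwi : ∀ n, ∫⁻ x, ‖fderiv ℝ (w n) x‖ₑ ≤ ENNReal.ofReal (R n) := by
    intro n
    have hi : Integrable (fun x => ‖mol n v x‖ + ((n:ℝ) + 1)⁻¹ * M * ‖mol n u x‖) :=
      (mol_integrable hv n).norm.add ((mol_integrable hu n).norm.const_mul _)
    calc ∫⁻ x, ‖fderiv ℝ (w n) x‖ₑ
        ≤ ∫⁻ x, ENNReal.ofReal (‖mol n v x‖ + ((n:ℝ) + 1)⁻¹ * M * ‖mol n u x‖) := by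
          refine lintegral_mono fun x => ?_
          rw [← ofReal_norm]
          exact ENNReal.ofReal_le_ofReal (hwf n x)
      _ = ENNReal.ofReal (∫ x, (‖mol n v x‖ + ((n:ℝ) + 1)⁻¹ * M * ‖mol n u x‖)) :=
          (ofReal_integral_eq_lintegral_ofReal hi
            (Eventually.of_forall fun x => by positivity)).symm
      _ ≤ _ := by
          refine ENNReal.ofReal_le_ofReal ?_
          rw [integral_add (mol_integrable hv n).norm ((mol_integrable hu n).norm.const_mul _),
            integral_const_mul]
          have a := mol_norm_le hv n
          have b := mol_norm_le hu n
          exact add_le_add a (mul_le_mul_of_nonneg_left b (by positivity))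
  have hRl : Tendsto R atTop (𝓝 (∫ x, ‖v x‖)) := by
    have := (((tendsto_one_div_add_atTop_nhds_zero_nat (𝕜 := ℝ)).mul_const M).mul_const
      (∫ x, ‖u x‖)).const_add (∫ x, ‖v x‖)
    simpa [hR] using this
  have hlim : Tendsto (fun n => C * (ENNReal.ofReal (R n)) ^ p) atTop
      (𝓝 (C * (ENNReal.ofReal (∫ x, ‖v x‖)) ^ p)) := by
    refine ENNReal.Tendsto.const_mul ?_ (Or.inr ENNReal.coe_ne_top)
    exact ((ENNReal.continuous_rpow_const (y := p)).tendsto _).comp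
      ((ENNReal.continuous_ofReal.tendsto _).comp hRl)
  calc ∫⁻ x, ‖u x‖ₑ ^ p = ∫⁻ x, liminf (fun n => ‖w n x‖ₑ ^ p) atTop := by
        refine lintegral_congr_ae ?_
        filter_upwards [hwl] with x hx
        have : Tendsto (fun n => ‖w n x‖ₑ ^ p) atTop (𝓝 (‖u x‖ₑ ^ p)) :=
          ((ENNReal.continuous_rpow_const (y := p)).tendsto _).comp
            ((continuous_enorm.tendsto _).comp hx)
        exact this.liminf_eq.symm
    _ ≤ liminf (fun n => ∫⁻ x, ‖w n x‖ₑ ^ p) atTop := by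
        refine lintegral_liminf_le fun n => ?_
        exact ((hwd n).continuous.measurable.enorm).pow_const p
    _ ≤ liminf (fun n => C * (ENNReal.ofReal (R n)) ^ p) atTop := by
        refine liminf_le_liminf (Eventually.of_forall fun n => ?_)
        refine (lintegral_pow_le_pow_lintegral_fderiv volume (hwd n) (hwc n) hconj).trans ?_
        gcongr
        exact hwi n
    _ = _ := hlim.liminf_eq

lemma enorm_abs_rpow {q : ℝ} (hq : 0 < q) (y : ℝ) : ‖|y| ^ q‖ₑ = ‖y‖ₑ ^ q := by
  rw [← ofReal_norm, ← ofReal_norm, ENNReal.ofReal_rpow_of_nonneg (norm_nonneg _) hq.le,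
    Real.norm_eq_abs, Real.norm_eq_abs, abs_of_nonneg (by positivity)]

lemma gn_real {N : ℕ} (hN : 2 ≤ N) {q : ℝ} (hq1 : 1 < q) (hq2 : q ≤ (N : ℝ) / ((N : ℝ) - 1)) :
    ∃ C : ℝ, 0 ≤ C ∧ ∀ (u : Euc N → ℝ) (v : Euc N → Euc N), MemW11 N u v →
      Integrable (fun x => |u x| ^ q) ∧
      ∫ x, |u x| ^ q ≤ C * ((∫ x, ‖u x‖) ^ (q - (q-1)*N) * (∫ x, ‖v x‖) ^ ((q-1)*(N:ℝ))) := by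
  obtain ⟨C, hC, hgns⟩ := gns hN
  have hN' : (2:ℝ) ≤ N := by exact_mod_cast hN
  have hN1 : 0 < (N:ℝ) - 1 := by linarith
  set p : ℝ := (N:ℝ) / ((N:ℝ) - 1) with hp
  set b : ℝ := (q - 1) * (N - 1) with hb
  have hb0 : 0 ≤ b := mul_nonneg (by linarith) (by linarith)
  have hpb : p * b = (q-1)*N := by rw [hp, hb]; field_simp
  have ha : 0 ≤ q - (q-1)*N := by
    rw [hp, le_div_iff₀ hN1] at hq2; linarith
  have hab : (q - (q-1)*N) + b = 1 := by rw [hb]; ring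
  have hq : (q - (q-1)*N) + p * b = q := by rw [hpb]; ring
  have hCb : C ^ b ≠ ⊤ := ENNReal.rpow_ne_top_of_nonneg hb0 hC
  refine ⟨(C ^ b).toReal, ENNReal.toReal_nonneg, fun u v h => ?_⟩
  have hu := h.1
  have hv := h.2.1
  have hu1 : ∫⁻ x, ‖u x‖ₑ = ENNReal.ofReal (∫ x, ‖u x‖) :=
    (ofReal_integral_norm_eq_lintegral_enorm hu).symm
  have key : ∫⁻ x, ‖u x‖ₑ ^ q ≤ ENNReal.ofReal ((C ^ b).toReal *
      ((∫ x, ‖u x‖) ^ (q - (q-1)*N) * (∫ x, ‖v x‖) ^ ((q-1)*(N:ℝ)))) := by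
    calc ∫⁻ x, ‖u x‖ₑ ^ q = ∫⁻ x, ‖u x‖ₑ ^ (q - (q-1)*N) * (‖u x‖ₑ ^ p) ^ b := by
          congr 1; ext x
          rw [← ENNReal.rpow_mul, ← ENNReal.rpow_add_of_nonneg _ _ ha (by rw [hpb]; nlinarith), hq]
      _ ≤ (∫⁻ x, ‖u x‖ₑ) ^ (q - (q-1)*N) * (∫⁻ x, ‖u x‖ₑ ^ p) ^ b :=
          ENNReal.lintegral_mul_norm_pow_le hu.aestronglyMeasurable.enorm
            (hu.aestronglyMeasurable.enorm.pow_const p) ha hb0 hab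
      _ ≤ (ENNReal.ofReal (∫ x, ‖u x‖)) ^ (q - (q-1)*N) *
            (C * (ENNReal.ofReal (∫ x, ‖v x‖)) ^ p) ^ b := by
          rw [hu1]; gcongr; exact hgns u v h
      _ = _ := by
          have i1 : 0 ≤ ∫ x, ‖u x‖ := integral_nonneg fun x => norm_nonneg _
          have i2 : 0 ≤ ∫ x, ‖v x‖ := integral_nonneg fun x => norm_nonneg _
          rw [ENNReal.mul_rpow_of_nonneg _ _ hb0, ← ENNReal.rpow_mul, hpb,
            ENNReal.ofReal_mul ENNReal.toReal_nonneg, ENNReal.ofReal_toReal hCb,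
            ENNReal.ofReal_mul (by positivity), ENNReal.ofReal_rpow_of_nonneg i1 ha,
            ENNReal.ofReal_rpow_of_nonneg i2 (by nlinarith)]
          ring
  have hme : AEStronglyMeasurable (fun x => |u x| ^ q) volume :=
    (hu.aestronglyMeasurable.aemeasurable.abs.pow_const q).aestronglyMeasurable
  have heq : ∀ x, ‖|u x| ^ q‖ₑ = ‖u x‖ₑ ^ q :=
    fun x => enorm_abs_rpow (by linarith) _
  have hpowInt : Integrable (fun x => |u x| ^ q) := by
    refine ⟨hme, ?_⟩
    unfold HasFiniteIntegral
    simp only [heq]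
    exact key.trans_lt ENNReal.ofReal_lt_top
  refine ⟨hpowInt, ?_⟩
  have h2 := ofReal_integral_norm_eq_lintegral_enorm hpowInt
  simp only [heq] at h2
  rw [← h2] at key
  have h3 : ∀ x, ‖|u x| ^ q‖ = |u x| ^ q := fun x => Real.norm_of_nonneg (by positivity)
  simp only [h3] at key
  refine (ENNReal.ofReal_le_ofReal_iff ?_).1 key
  have i1 : 0 ≤ ∫ x, ‖u x‖ := integral_nonneg fun x => norm_nonneg _
  have i2 : 0 ≤ ∫ x, ‖v x‖ := integral_nonneg fun x => norm_nonneg _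
  have := ENNReal.toReal_nonneg (a := C ^ b)
  positivity

lemma ratio_eq {N : ℕ} {q : ℝ} (hq1 : 1 < q) {u : Euc N → ℝ} {v : Euc N → Euc N}
    (h : MemW11 N u v) (hI : Integrable (fun x => |u x| ^ q)) :
    ratioQW N q u v =
      (∫ x, |u x| ^ q) / ((∫ x, ‖u x‖) ^ (q - (q-1)*N) * (∫ x, ‖v x‖) ^ ((q-1)*(N:ℝ))) := by
  have hq0 : 0 < q := by linarith
  have e1 : ∀ {F : Type} [NormedAddCommGroup F] {f : Euc N → F}, Integrable f →
      (eLpNorm f 1 volume).toReal = ∫ x, ‖f x‖ := by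
    intro F _ f hf
    rw [eLpNorm_one_eq_lintegral_enorm, integral_norm_eq_lintegral_enorm hf.aestronglyMeasurable]
  have e2 : nrmq N q u ^ q = ∫ x, |u x| ^ q := by
    unfold nrmq
    have hqq : (ENNReal.ofReal q).toReal = q := ENNReal.toReal_ofReal hq0.le
    rw [eLpNorm_eq_lintegral_rpow_enorm_toReal (by simpa using hq0) ENNReal.ofReal_ne_top, hqq,
      ENNReal.toReal_rpow, ← ENNReal.rpow_mul, one_div, inv_mul_cancel₀ hq0.ne', ENNReal.rpow_one]
    have h3 : ∀ x, ‖|u x| ^ q‖ = |u x| ^ q := fun x => Real.norm_of_nonneg (by positivity)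
    have := integral_norm_eq_lintegral_enorm hI.aestronglyMeasurable
    simp only [h3] at this
    rw [this]
    congr 2; ext x
    exact (enorm_abs_rpow hq0 _).symm
  unfold ratioQW nrm1
  rw [e2, e1 h.1, e1 h.2.1]

lemma holder2 {θ τ x₁ x₂ y₁ y₂ : ℝ} (hθ : 0 ≤ θ) (hτ : 0 ≤ τ) (hs : θ + τ = 1)
    (hx₁ : 0 ≤ x₁) (hx₂ : 0 ≤ x₂) (hy₁ : 0 ≤ y₁) (hy₂ : 0 ≤ y₂) (hx : 0 < x₁ + x₂)
    (hy : 0 < y₁ + y₂) :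
    x₁ ^ θ * y₁ ^ τ + x₂ ^ θ * y₂ ^ τ ≤ (x₁ + x₂) ^ θ * (y₁ + y₂) ^ τ := by
  have h1 := Real.geom_mean_le_arith_mean2_weighted hθ hτ (div_nonneg hx₁ hx.le)
    (div_nonneg hy₁ hy.le) hs
  have h2 := Real.geom_mean_le_arith_mean2_weighted hθ hτ (div_nonneg hx₂ hx.le)
    (div_nonneg hy₂ hy.le) hs
  rw [Real.div_rpow hx₁ hx.le, Real.div_rpow hy₁ hy.le] at h1
  rw [Real.div_rpow hx₂ hx.le, Real.div_rpow hy₂ hy.le] at h2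
  have hX : 0 < (x₁ + x₂) ^ θ := Real.rpow_pos_of_pos hx _
  have hY : 0 < (y₁ + y₂) ^ τ := Real.rpow_pos_of_pos hy _
  have h3 : θ * (x₁ / (x₁ + x₂)) + τ * (y₁ / (y₁ + y₂)) +
      (θ * (x₂ / (x₁ + x₂)) + τ * (y₂ / (y₁ + y₂))) = 1 := by
    have e1 : x₁ / (x₁ + x₂) + x₂ / (x₁ + x₂) = 1 := by field_simp
    have e2 : y₁ / (y₁ + y₂) + y₂ / (y₁ + y₂) = 1 := by field_simp
    linear_combination θ * e1 + τ * e2 + hs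
  have h4 : x₁ ^ θ / (x₁ + x₂) ^ θ * (y₁ ^ τ / (y₁ + y₂) ^ τ) +
      x₂ ^ θ / (x₁ + x₂) ^ θ * (y₂ ^ τ / (y₁ + y₂) ^ τ) ≤ 1 := by linarith
  have h5 : x₁ ^ θ / (x₁ + x₂) ^ θ * (y₁ ^ τ / (y₁ + y₂) ^ τ) +
      x₂ ^ θ / (x₁ + x₂) ^ θ * (y₂ ^ τ / (y₁ + y₂) ^ τ) =
      (x₁ ^ θ * y₁ ^ τ + x₂ ^ θ * y₂ ^ τ) / ((x₁ + x₂) ^ θ * (y₁ + y₂) ^ τ) := by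
    field_simp
  rw [h5, div_le_one (by positivity)] at h4
  exact h4

lemma root_split {E x y α β q : ℝ} (hE : 0 ≤ E) (hx : 0 ≤ x) (hy : 0 ≤ y) :
    (E * (x ^ α * y ^ β)) ^ q⁻¹ = E ^ q⁻¹ * (x ^ (α / q) * y ^ (β / q)) := by
  rw [Real.mul_rpow hE (by positivity), Real.mul_rpow (by positivity) (by positivity),
    ← Real.rpow_mul hx, ← Real.rpow_mul hy, div_eq_mul_inv, div_eq_mul_inv]

/-- Equality case of Minkowski, in the form needed. -/
lemma mink_eq {X : Type} [MeasurableSpace X] {μ : Measure X} {q : ℝ} (hq : 1 < q)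
    {f g : X → ℝ} (hf0 : ∀ x, 0 ≤ f x) (hg0 : ∀ x, 0 ≤ g x)
    (hf : Integrable (fun x => f x ^ q) μ) (hg : Integrable (fun x => g x ^ q) μ)
    (hfg : Integrable (fun x => (f x + g x) ^ q) μ)
    (hA : 0 < ∫ x, f x ^ q ∂μ) (hB : 0 < ∫ x, g x ^ q ∂μ)
    (hle : (∫ x, f x ^ q ∂μ) ^ q⁻¹ + (∫ x, g x ^ q ∂μ) ^ q⁻¹ ≤
      (∫ x, (f x + g x) ^ q ∂μ) ^ q⁻¹) :
    ∀ᵐ x ∂μ, f x / (∫ x, f x ^ q ∂μ) ^ q⁻¹ = g x / (∫ x, g x ^ q ∂μ) ^ q⁻¹ := by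
  have hq0 : 0 < q := by linarith
  set A := ∫ x, f x ^ q ∂μ with hAdef
  set B := ∫ x, g x ^ q ∂μ with hBdef
  set P := A ^ q⁻¹ with hP
  set R := B ^ q⁻¹ with hR
  have hP0 : 0 < P := Real.rpow_pos_of_pos hA _
  have hR0 : 0 < R := Real.rpow_pos_of_pos hB _
  have hPq : P ^ q = A := Real.rpow_inv_rpow hA.le hq0.ne'
  have hRq : R ^ q = B := Real.rpow_inv_rpow hB.le hq0.ne'
  have hPR : 0 < P + R := by positivity
  set l := P / (P + R) with hl
  set m := R / (P + R) with hm
  have hl0 : 0 < l := by positivity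
  have hm0 : 0 < m := by positivity
  have hlm : l + m = 1 := by rw [hl, hm]; field_simp
  have hcomb : ∀ x, l * (f x / P) + m * (g x / R) = (f x + g x) / (P + R) := by
    intro x; rw [hl, hm]; field_simp
  have hcvx := strictConvexOn_rpow hq
  set D : X → ℝ := fun x => l * (f x / P) ^ q + m * (g x / R) ^ q - ((f x + g x) / (P + R)) ^ q
    with hD
  have hD0 : ∀ x, 0 ≤ D x := by
    intro x
    have := hcvx.convexOn.2 (x := f x / P) (y := g x / R) (div_nonneg (hf0 x) hP0.le)
      (div_nonneg (hg0 x) hR0.le) hl0.le hm0.le hlm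
    simp only [smul_eq_mul, hcomb] at this
    simp only [hD]; linarith
  have e : ∀ x, D x = l / A * f x ^ q + m / B * g x ^ q - ((P + R) ^ q)⁻¹ * (f x + g x) ^ q := by
    intro x
    simp only [hD]
    rw [Real.div_rpow (hf0 x) hP0.le, Real.div_rpow (hg0 x) hR0.le,
      Real.div_rpow (add_nonneg (hf0 x) (hg0 x)) hPR.le, hPq, hRq]
    ring
  have hDi : Integrable D μ := by
    rw [funext e]
    exact ((hf.const_mul _).add (hg.const_mul _)).sub (hfg.const_mul _)
  have hDle : ∫ x, D x ∂μ ≤ 0 := by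
    have hsum : Integrable (fun x => l / A * f x ^ q + m / B * g x ^ q) μ :=
      (hf.const_mul _).add (hg.const_mul _)
    simp only [e]
    rw [integral_sub hsum (hfg.const_mul _)]
    have : ∫ x, (l / A * f x ^ q + m / B * g x ^ q) ∂μ = 1 := by
      rw [integral_add (hf.const_mul _) (hg.const_mul _), integral_const_mul, integral_const_mul,
        ← hAdef, ← hBdef, div_mul_cancel₀ _ hA.ne', div_mul_cancel₀ _ hB.ne', hlm]
    rw [this, integral_const_mul]
    have hUn : 0 ≤ ∫ x, (f x + g x) ^ q ∂μ :=
      integral_nonneg fun x => Real.rpow_nonneg (add_nonneg (hf0 x) (hg0 x)) _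
    have h1 : (P + R) ^ q ≤ ∫ x, (f x + g x) ^ q ∂μ := by
      calc (P + R) ^ q ≤ ((∫ x, (f x + g x) ^ q ∂μ) ^ q⁻¹) ^ q :=
            Real.rpow_le_rpow hPR.le hle hq0.le
        _ = _ := Real.rpow_inv_rpow hUn hq0.ne'
    have h2 : 0 < (P + R) ^ q := Real.rpow_pos_of_pos hPR _
    have h3 : 1 ≤ ((P + R) ^ q)⁻¹ * ∫ x, (f x + g x) ^ q ∂μ := by
      rw [inv_mul_eq_div, le_div_iff₀ h2]; linarith
    linarith
  have hDz : D =ᵐ[μ] 0 := (integral_eq_zero_iff_of_nonneg hD0 hDi).1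
    (le_antisymm hDle (integral_nonneg hD0))
  filter_upwards [hDz] with x hx
  by_contra hne
  have := hcvx.2 (x := f x / P) (div_nonneg (hf0 x) hP0.le) (y := g x / R)
      (div_nonneg (hg0 x) hR0.le) hne hl0 hm0 hlm
  simp only [smul_eq_mul, hcomb] at this
  simp only [hD, Pi.zero_apply] at hx
  linarith

lemma core {N : ℕ} {q : ℝ} (hq1 : 1 < q) (hN : 0 < (N:ℝ)) (hα : 0 ≤ q - (q-1)*N) {E : ℝ}
    (hE : 0 < E)
    (hGN : ∀ (u : Euc N → ℝ) (v : Euc N → Euc N), MemW11 N u v →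
      Integrable (fun x => |u x| ^ q) ∧
      ∫ x, |u x| ^ q ≤ E * ((∫ x, ‖u x‖) ^ (q - (q-1)*N) * (∫ x, ‖v x‖) ^ ((q-1)*(N:ℝ))))
    {u : Euc N → ℝ} {v : Euc N → Euc N} (h : MemW11 N u v)
    (heq : ∫ x, |u x| ^ q = E * ((∫ x, ‖u x‖) ^ (q - (q-1)*N) * (∫ x, ‖v x‖) ^ ((q-1)*(N:ℝ))))
    {s : ℝ} (hs : 0 < s) (hpos : ¬ ∀ᵐ x, u x ≤ s) : False := by
  have hq0 : 0 < q := by linarith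
  have hβ : 0 < (q-1)*(N:ℝ) := mul_pos (by linarith) hN
  -- zero integrals
  have zero_of : ∀ (w : Euc N → ℝ) (z : Euc N → Euc N), MemW11 N w z →
      ∫ x, |w x| ^ q ≤ 0 → ∀ᵐ x, w x = 0 := by
    intro w z hw h0
    have hn : ∀ x, 0 ≤ |w x| ^ q := fun x => by positivity
    have := (integral_eq_zero_iff_of_nonneg hn (hGN w z hw).1).1
      (le_antisymm h0 (integral_nonneg hn))
    filter_upwards [this] with x hx
    have hx' : |w x| ^ q = 0 := hx
    rw [Real.rpow_eq_zero (abs_nonneg _) hq0.ne'] at hx'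
    exact abs_eq_zero.1 hx'
  have hune : ¬ ∀ᵐ x, u x = 0 := fun hh => hpos (hh.mono fun x hx => by rw [hx]; exact hs.le)
  have hY : 0 < ∫ x, ‖v x‖ := by
    refine lt_of_le_of_ne (integral_nonneg fun x => norm_nonneg _) fun h0 => hune ?_
    refine zero_of u v h ?_
    rw [heq, ← h0, Real.zero_rpow hβ.ne']; simp
  have hX : 0 < ∫ x, ‖u x‖ := by
    refine lt_of_le_of_ne (integral_nonneg fun x => norm_nonneg _) fun h0 => hune ?_
    have := (integral_eq_zero_iff_of_nonneg (fun x => norm_nonneg (u x)) h.1.norm).1 h0.symm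
    filter_upwards [this] with x hx
    exact norm_eq_zero.1 hx
  set k : Euc N → ℝ := fun x => (Set.Ioi s).indicator (fun _ => (1:ℝ)) (u x) with hk
  set b : Euc N → ℝ := fun x => max (u x - s) 0 with hb
  set Gb : Euc N → Euc N := fun x => k x • v x with hGb
  have hbW : MemW11 N b Gb := trunc h hs.le
  set a : Euc N → ℝ := fun x => u x - b x with ha
  set Ga : Euc N → Euc N := fun x => v x - Gb x with hGa
  have haW : MemW11 N a Ga := h.sub hbW
  have pt : ∀ x, (s < u x ∧ b x = u x - s ∧ a x = s ∧ Gb x = v x ∧ Ga x = 0) ∨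
      (u x ≤ s ∧ b x = 0 ∧ a x = u x ∧ Gb x = 0 ∧ Ga x = v x) := by
    intro x
    rcases lt_or_ge s (u x) with hx | hx
    · left
      have e1 : b x = u x - s := max_eq_left (by linarith)
      have e2 : k x = 1 := Set.indicator_of_mem (by exact hx) _
      refine ⟨hx, e1, by simp [ha, e1], by simp [hGb, e2], by simp [hGa, hGb, e2]⟩
    · right
      have e1 : b x = 0 := max_eq_right (by linarith)
      have e2 : k x = 0 := Set.indicator_of_notMem (by simpa using hx) _
      refine ⟨hx, e1, by simp [ha, e1], by simp [hGb, e2], by simp [hGa, hGb, e2]⟩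
  have habs : ∀ x, |a x| + |b x| = |u x| := by
    intro x
    rcases pt x with ⟨h1, h2, h3, -, -⟩ | ⟨h1, h2, h3, -, -⟩
    · rw [h2, h3, abs_of_pos hs, abs_of_pos (by linarith), abs_of_pos (by linarith)]; ring
    · rw [h2, h3]; simp
  have hnv : ∀ x, ‖Ga x‖ + ‖Gb x‖ = ‖v x‖ := by
    intro x
    rcases pt x with ⟨-, -, -, h4, h5⟩ | ⟨-, -, -, h4, h5⟩ <;> rw [h4, h5] <;> simp
  have hXs : (∫ x, ‖a x‖) + ∫ x, ‖b x‖ = ∫ x, ‖u x‖ := by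
    rw [← integral_add haW.1.norm hbW.1.norm]
    exact integral_congr_ae (Eventually.of_forall habs)
  have hYs : (∫ x, ‖Ga x‖) + ∫ x, ‖Gb x‖ = ∫ x, ‖v x‖ := by
    rw [← integral_add haW.2.1.norm hbW.2.1.norm]
    exact integral_congr_ae (Eventually.of_forall hnv)
  obtain ⟨hai, haE⟩ := hGN a Ga haW
  obtain ⟨hbi, hbE⟩ := hGN b Gb hbW
  obtain ⟨hui, -⟩ := hGN u v h
  have hA : 0 < ∫ x, |a x| ^ q := by
    by_contra hle
    refine hpos ?_
    filter_upwards [zero_of a Ga haW (not_lt.1 hle)] with x hx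
    rcases pt x with ⟨-, -, h3, -, -⟩ | ⟨h1, -⟩
    · linarith
    · exact h1
  have hB : 0 < ∫ x, |b x| ^ q := by
    by_contra hle
    refine hpos ?_
    filter_upwards [zero_of b Gb hbW (not_lt.1 hle)] with x hx
    rcases pt x with ⟨-, h2, -, -, -⟩ | ⟨h1, -⟩
    · linarith
    · exact h1
  have i1 : 0 ≤ ∫ x, ‖a x‖ := integral_nonneg fun x => norm_nonneg _
  have i2 : 0 ≤ ∫ x, ‖b x‖ := integral_nonneg fun x => norm_nonneg _
  have i3 : 0 ≤ ∫ x, ‖Ga x‖ := integral_nonneg fun x => norm_nonneg _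
  have i4 : 0 ≤ ∫ x, ‖Gb x‖ := integral_nonneg fun x => norm_nonneg _
  have hle : (∫ x, |a x| ^ q) ^ q⁻¹ + (∫ x, |b x| ^ q) ^ q⁻¹ ≤
      (∫ x, (|a x| + |b x|) ^ q) ^ q⁻¹ := by
    simp only [habs]
    rw [heq, root_split hE.le hX.le hY.le]
    have qi : 0 ≤ q⁻¹ := by positivity
    have h1 := Real.rpow_le_rpow hA.le haE qi
    have h2 := Real.rpow_le_rpow hB.le hbE qi
    rw [root_split hE.le i1 i3] at h1
    rw [root_split hE.le i2 i4] at h2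
    have h3 := holder2 (θ := (q - (q-1)*N) / q) (τ := ((q-1)*(N:ℝ)) / q) (by positivity)
      (by positivity) (by field_simp; ring) i1 i2 i3 i4 (by rw [hXs]; exact hX)
      (by rw [hYs]; exact hY)
    rw [hXs, hYs] at h3
    have h4 := mul_le_mul_of_nonneg_left h3 (Real.rpow_nonneg hE.le q⁻¹)
    linarith
  have hm := mink_eq hq1 (fun x => abs_nonneg (a x)) (fun x => abs_nonneg (b x)) hai hbi
    (by simp only [habs]; exact hui) hA hB hle
  set P := (∫ x, |a x| ^ q) ^ q⁻¹ with hP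
  set R := (∫ x, |b x| ^ q) ^ q⁻¹ with hR
  have hP0 : 0 < P := Real.rpow_pos_of_pos hA _
  have hR0 : 0 < R := Real.rpow_pos_of_pos hB _
  have hz : ∀ᵐ x, P⁻¹ * a x - R⁻¹ * b x = 0 := by
    filter_upwards [hm] with x hx
    rcases pt x with ⟨h1, h2, h3, -, -⟩ | ⟨h1, h2, h3, -, -⟩
    · have hb' : 0 < b x := by rw [h2]; linarith
      have ha' : 0 < a x := by rw [h3]; exact hs
      rw [abs_of_pos hb', abs_of_pos ha'] at hx
      rw [inv_mul_eq_div, inv_mul_eq_div, hx, sub_self]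
    · rw [h2] at hx ⊢
      simp only [abs_zero, zero_div, div_eq_zero_iff, hP0.ne', or_false, abs_eq_zero] at hx
      rw [hx]; simp
  have hv0 := ((haW.smul P⁻¹).sub (hbW.smul R⁻¹)).grad_zero hz
  have hv1 : ∀ᵐ x, ‖v x‖ = 0 := by
    filter_upwards [hv0] with x hx
    rcases pt x with ⟨-, -, -, h4, h5⟩ | ⟨-, -, -, h4, h5⟩
    · rw [h4, h5] at hx
      simpa [hR0.ne'] using hx
    · rw [h4, h5] at hx
      simpa [hP0.ne'] using hx
  exact hY.ne' (integral_eq_zero_of_ae hv1)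

lemma cut_mem (N : ℕ) : ∃ v, MemW11 N (cut N) v := by
  have hd : ContDiff ℝ 1 (cut N) := (cut N).contDiff
  have hc : HasCompactSupport (cut N) := (cut N).hasCompactSupport
  have hfi : Integrable (fderiv ℝ (cut N)) :=
    (hd.continuous_fderiv one_ne_zero).integrable_of_hasCompactSupport (hc.fderiv ℝ)
  have hui : Integrable (cut N) := hd.continuous.integrable_of_hasCompactSupport hc
  have hvi : Integrable (fun x => (InnerProductSpace.toDual ℝ (Euc N)).symm (fderiv ℝ (cut N) x)) :=
    (InnerProductSpace.toDual ℝ (Euc N)).symm.toContinuousLinearEquiv.toContinuousLinearMap.integrable_comp hfi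
  refine ⟨fun x => (InnerProductSpace.toDual ℝ (Euc N)).symm (fderiv ℝ (cut N) x), hui, hvi, ?_⟩
  intro ψ hψ hψc i
  obtain ⟨K, hK0, hK1, hK2⟩ := test_bound hψ hψc (EuclideanSpace.single i 1)
  have hdc : Continuous (fun x => fderiv ℝ ψ x (EuclideanSpace.single i 1)) :=
    (hψ.continuous_fderiv one_ne_zero).clm_apply continuous_const
  have hco : ∀ x, ((InnerProductSpace.toDual ℝ (Euc N)).symm (fderiv ℝ (cut N) x)) i
      = fderiv ℝ (cut N) x (EuclideanSpace.single i 1) := by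
    intro x
    rw [← InnerProductSpace.toDual_symm_apply (x := EuclideanSpace.single i (1:ℝ))
      (y := fderiv ℝ (cut N) x), EuclideanSpace.inner_single_right]
    simp
  have h1 := int_mul_test (coord_int hvi i) hψ.continuous hK1
  simp only [hco] at h1 ⊢
  exact integral_mul_fderiv_eq_neg_fderiv_mul_of_integrable h1 (int_mul_test hui hdc hK2)
    (int_mul_test hui hψ.continuous hK1) (fun x _ => hd.differentiable one_ne_zero x)
    (fun x _ => hψ.differentiable one_ne_zero x)

/-- `Ẽ_q` is not attained by any nonzero `u ∈ W^{1,1}(ℝ^N)`. -/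
theorem EqW_not_attained (N : ℕ) (hN : 2 ≤ N) (q : ℝ) (hq1 : 1 < q)
    (hq2 : q ≤ (N : ℝ) / ((N : ℝ) - 1)) :
    ¬ ∃ u : Euc N → ℝ, ∃ v : Euc N → Euc N,
        MemW11 N u v ∧ u ≠ 0 ∧ ratioQW N q u v = EqSupW N q := by
  have hq0 : 0 < q := by linarith
  have hN' : (2:ℝ) ≤ N := by exact_mod_cast hN
  have hα : 0 ≤ q - (q-1)*N := by
    rw [le_div_iff₀ (by linarith)] at hq2; linarith
  have hβ : 0 < (q-1)*(N:ℝ) := mul_pos (by linarith) (by linarith)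
  obtain ⟨C, hC, hgn⟩ := gn_real hN hq1 hq2
  have i1 : ∀ u : Euc N → ℝ, 0 ≤ ∫ x, ‖u x‖ := fun u => integral_nonneg fun x => norm_nonneg _
  have i2 : ∀ v : Euc N → Euc N, 0 ≤ ∫ x, ‖v x‖ := fun v => integral_nonneg fun x => norm_nonneg _
  have i3 : ∀ u : Euc N → ℝ, 0 ≤ ∫ x, |u x| ^ q := fun u => integral_nonneg fun x => by positivity
  have hD0 : ∀ (u : Euc N → ℝ) (v : Euc N → Euc N),
      0 ≤ (∫ x, ‖u x‖) ^ (q - (q-1)*N) * (∫ x, ‖v x‖) ^ ((q-1)*(N:ℝ)) := fun u v =>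
    mul_nonneg (Real.rpow_nonneg (i1 u) _) (Real.rpow_nonneg (i2 v) _)
  set S := { r | ∃ u : Euc N → ℝ, ∃ v : Euc N → Euc N,
      MemW11 N u v ∧ u ≠ 0 ∧ r = ratioQW N q u v } with hS
  set E := EqSupW N q with hEdef
  have hES : E = sSup S := rfl
  have hbdd : BddAbove S := by
    refine ⟨C, ?_⟩
    rintro r ⟨u, v, h, -, rfl⟩
    rw [ratio_eq hq1 h (hgn u v h).1]
    exact div_le_of_le_mul₀ (hD0 u v) hC (hgn u v h).2
  have hratio : ∀ u v, MemW11 N u v → u ≠ 0 → ratioQW N q u v ≤ E := fun u v h hu =>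
    le_csSup hbdd ⟨u, v, h, hu, rfl⟩
  have hE : 0 < E := by
    obtain ⟨v, h⟩ := cut_mem N
    have hc0 : cut N 0 = 1 := (cut N).one_of_mem_closedBall (by simp [cut])
    have hne : (cut N : Euc N → ℝ) ≠ 0 := by
      intro h0
      rw [h0] at hc0
      simp at hc0
    refine lt_of_lt_of_le ?_ (hratio _ v h hne)
    obtain ⟨hi, hle⟩ := hgn _ v h
    rw [ratio_eq hq1 h hi]
    have hcont : Continuous (fun x => |cut N x| ^ q) :=
      (cut N).continuous.abs.rpow_const fun x => Or.inr hq0.le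
    have hpos : 0 < ∫ x, |cut N x| ^ q := by
      refine hcont.integral_pos_of_hasCompactSupport_nonneg_nonzero ?_ (fun x => by positivity)
        (x := 0) (by rw [hc0]; simp)
      exact (cut N).hasCompactSupport.comp_left (g := fun y : ℝ => |y| ^ q)
        (by simp [hq0.ne'])
    refine div_pos hpos (lt_of_le_of_ne (hD0 _ v) fun h0 => ?_)
    rw [← h0] at hle
    linarith
  have hGN : ∀ (u : Euc N → ℝ) (v : Euc N → Euc N), MemW11 N u v →
      Integrable (fun x => |u x| ^ q) ∧
      ∫ x, |u x| ^ q ≤ E * ((∫ x, ‖u x‖) ^ (q - (q-1)*N) * (∫ x, ‖v x‖) ^ ((q-1)*(N:ℝ))) := by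
    intro u v h
    obtain ⟨hi, hle⟩ := hgn u v h
    refine ⟨hi, ?_⟩
    by_cases hu : u = 0
    · have : ∫ x, |u x| ^ q = 0 := by simp [hu, Real.zero_rpow hq0.ne']
      rw [this]
      exact mul_nonneg hE.le (hD0 u v)
    · rcases (hD0 u v).eq_or_lt with h0 | h0
      · rw [← h0] at hle ⊢
        linarith
      · have := hratio u v h hu
        rw [ratio_eq hq1 h hi, div_le_iff₀ h0] at this
        exact this
  rintro ⟨u, v, h, hu, hatt⟩
  have hi := (hGN u v h).1
  rw [ratio_eq hq1 h hi] at hatt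
  have hDne : (∫ x, ‖u x‖) ^ (q - (q-1)*N) * (∫ x, ‖v x‖) ^ ((q-1)*(N:ℝ)) ≠ 0 := by
    intro h0
    rw [h0, div_zero] at hatt
    exact hE.ne hatt
  have heq := (div_eq_iff hDne).1 hatt
  have hcoreu : ∀ s : ℝ, 0 < s → ∀ᵐ x, u x ≤ s := by
    intro s hs
    by_contra hcon
    exact core hq1 (by linarith) hα hE hGN h heq hs hcon
  have hcoren : ∀ s : ℝ, 0 < s → ∀ᵐ x, - u x ≤ s := by
    intro s hs
    by_contra hcon
    have h' := h.smul (-1)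
    simp only [neg_mul, one_mul, neg_smul, one_smul] at h'
    refine core hq1 (by linarith) hα hE hGN h' ?_ hs hcon
    simpa only [abs_neg, norm_neg] using heq
  have hall : ∀ᵐ x, u x = 0 := by
    have a1 := ae_all_iff.2 fun n : ℕ => hcoreu (1 / ((n:ℝ) + 1)) (by positivity)
    have a2 := ae_all_iff.2 fun n : ℕ => hcoren (1 / ((n:ℝ) + 1)) (by positivity)
    filter_upwards [a1, a2] with x h1 h2
    have b1 := ge_of_tendsto' (tendsto_one_div_add_atTop_nhds_zero_nat (𝕜 := ℝ)) h1
    have b2 := ge_of_tendsto' (tendsto_one_div_add_atTop_nhds_zero_nat (𝕜 := ℝ)) h2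
    linarith
  have hz : ∫ x, |u x| ^ q = 0 := by
    refine integral_eq_zero_of_ae ?_
    filter_upwards [hall] with x hx
    simp [hx, Real.zero_rpow hq0.ne']
  rw [hz, zero_div] at hatt
  exact hE.ne hatt
end
end

section
/- Let N ≥ 2, 1 < q ≤ 1* := N/(N-1), α > 0, a > 0, b > 0, and set E_q := (1/(N^{N-1} ω_{N-1}))^{q-1}. Define D_α := sup { ‖u‖_1 + α ‖u‖_q^q : u ∈ BV(ℝ^N), ‖u‖_{TV}^a + ‖u‖_1^b = 1 } and, for t > 0, f_α(t) := ((1+t)^{(q-1)(N/a - (N-1)/b)} + α E_q t^{(q-1)N/a}) / (1+t)^{(q-1)N/a + (N - q(N-1))/b}. Then D_α = sup_{t>0} f_α(t). -/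
open MeasureTheory Real Filter Topology

noncomputable section

namespace BVaux
open scoped ENNReal NNReal Pointwise

/-- Layer cake for `ℝ≥0∞`-valued functions. -/
lemma layer {X : Type*} [MeasurableSpace X] (μ : Measure X) [SFinite μ] (f : X → ℝ≥0∞)
    (hf : Measurable f) :
    ∫⁻ x, f x ∂μ = ∫⁻ t in Set.Ioi (0:ℝ), μ {x | ENNReal.ofReal t < f x} := by
  have h1 : ∀ x, f x = ∫⁻ t in Set.Ioi (0:ℝ),
      Set.indicator {p : X × ℝ | ENNReal.ofReal p.2 < f p.1} (fun _ => (1:ℝ≥0∞)) (x, t) := by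
    intro x
    have : (fun t : ℝ => Set.indicator {p : X × ℝ | ENNReal.ofReal p.2 < f p.1}
        (fun _ => (1:ℝ≥0∞)) (x, t)) = Set.indicator {t : ℝ | ENNReal.ofReal t < f x} 1 := by
      ext t; simp [Set.indicator]
    rw [this, lintegral_indicator_one (measurableSet_lt (by fun_prop) (by fun_prop)),
      Measure.restrict_apply (measurableSet_lt (by fun_prop) (by fun_prop))]
    by_cases hx : f x = ∞
    · have : {t : ℝ | ENNReal.ofReal t < f x} ∩ Set.Ioi 0 = Set.Ioi 0 := by
        ext t; simp [hx]
      rw [this, hx]; simp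
    · have : {t : ℝ | ENNReal.ofReal t < f x} ∩ Set.Ioi 0 = Set.Ioo 0 (f x).toReal := by
        ext t
        simp only [Set.mem_inter_iff, Set.mem_ofPred_eq, Set.mem_Ioi, Set.mem_Ioo]
        constructor
        · rintro ⟨h, h0⟩
          exact ⟨h0, (ENNReal.ofReal_lt_iff_lt_toReal h0.le hx).1 h⟩
        · rintro ⟨h0, h⟩
          exact ⟨(ENNReal.ofReal_lt_iff_lt_toReal h0.le hx).2 h, h0⟩
      rw [this]; simp [hx]
  have hm : MeasurableSet {p : X × ℝ | ENNReal.ofReal p.2 < f p.1} :=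
    measurableSet_lt (by fun_prop) (by fun_prop)
  conv_lhs => enter [2, x]; rw [h1 x]
  rw [lintegral_lintegral_swap]
  · refine lintegral_congr fun t => ?_
    have : (fun x : X => Set.indicator {p : X × ℝ | ENNReal.ofReal p.2 < f p.1}
        (fun _ => (1:ℝ≥0∞)) (x, t)) = Set.indicator {x : X | ENNReal.ofReal t < f x} 1 := by
      ext t; simp [Set.indicator]
    rw [this, lintegral_indicator_one (measurableSet_lt (by fun_prop) (by fun_prop))]
  · exact (measurable_const.indicator hm).aemeasurable

lemma bm1_compact {K L C : Set ℝ} (hK : IsCompact K) (hL : IsCompact L)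
    (hKn : K.Nonempty) (hLn : L.Nonempty)
    (h : ∀ x ∈ K, ∀ y ∈ L, x + y ∈ C) : volume K + volume L ≤ volume C := by
  obtain ⟨M, hM, hMm⟩ := hK.exists_isGreatest hKn
  obtain ⟨m, hm, hmm⟩ := hL.exists_isLeast hLn
  have e1 : volume K = volume ((fun x => x + m) '' K) := by
    rw [Set.image_add_right, measure_preimage_add_right]
  have e2 : volume L = volume ((fun x => M + x) '' L) := by
    rw [Set.image_add_left, measure_preimage_add]
  have hmeas : MeasurableSet ((fun x => M + x) '' L) :=
    (hL.image (by fun_prop)).measurableSet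
  rw [e1, e2, ← measure_union₀ hmeas.nullMeasurableSet]
  · apply measure_mono
    rintro z (⟨x, hx, rfl⟩ | ⟨y, hy, rfl⟩)
    · exact h x hx m hm
    · exact h M hM y hy
  · refine measure_mono_null (t := {M + m}) ?_ (by simp)
    rintro z ⟨⟨x, hx, rfl⟩, ⟨y, hy, hxy⟩⟩
    have := hMm hx
    have := hmm hy
    simp only [Set.mem_singleton_iff] at *
    linarith

lemma bm1 {A B C : Set ℝ} (hA : MeasurableSet A) (hB : MeasurableSet B)
    (hAn : A.Nonempty) (hBn : B.Nonempty)
    (h : ∀ x ∈ A, ∀ y ∈ B, x + y ∈ C) : volume A + volume B ≤ volume C := by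
  obtain ⟨x0, hx0⟩ := hAn
  obtain ⟨y0, hy0⟩ := hBn
  have key : ∀ K, K ⊆ A → IsCompact K → ∀ L, L ⊆ B → IsCompact L →
      volume K + volume L ≤ volume C := by
    intro K hKA hK L hLB hL
    have := bm1_compact (C := C) (hK.insert x0) (hL.insert y0) (Set.insert_nonempty _ _)
      (Set.insert_nonempty _ _) (fun x hx y hy => h x (Set.insert_subset hx0 hKA hx) y
        (Set.insert_subset hy0 hLB hy))
    exact le_trans (add_le_add (measure_mono (Set.subset_insert _ _))
      (measure_mono (Set.subset_insert _ _))) this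
  refine ENNReal.le_of_forall_pos_le_add fun ε hε hC => ?_
  have fin : ∀ {A B : Set ℝ}, MeasurableSet A → (∃ y, y ∈ B) → (∀ x ∈ A, ∀ y ∈ B, x + y ∈ C) →
      volume A ≠ ∞ := by
    rintro A B hA ⟨y, hy⟩ h
    have : volume A ≤ volume C := by
      have e1 : volume A = volume ((fun x => x + y) '' A) := by
        rw [Set.image_add_right, measure_preimage_add_right]
      rw [e1]; apply measure_mono
      rintro _ ⟨x, hx, rfl⟩; exact h x hx y hy
    exact (this.trans_lt hC).ne
  have hAf := fin hA ⟨y0, hy0⟩ h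
  have hBf := fin hB ⟨x0, hx0⟩ (fun x hx y hy => by rw [add_comm]; exact h y hy x hx)
  have hε2 : ((ε/2 : ℝ≥0) : ℝ≥0∞) ≠ 0 := by
    have : 0 < ε / 2 := by positivity
    exact_mod_cast this.ne'
  obtain ⟨K, hKA, hK, hK2⟩ := hA.exists_isCompact_lt_add hAf hε2
  obtain ⟨L, hLB, hL, hL2⟩ := hB.exists_isCompact_lt_add hBf hε2
  calc volume A + volume B ≤ (volume K + (ε/2 : ℝ≥0)) + (volume L + (ε/2 : ℝ≥0)) :=
        add_le_add hK2.le hL2.le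
    _ = (volume K + volume L) + ((ε/2 : ℝ≥0) + (ε/2 : ℝ≥0) : ℝ≥0∞) := by ring
    _ = (volume K + volume L) + ε := by
        congr 1; rw [← ENNReal.coe_add, add_halves]
    _ ≤ _ := add_le_add (key K hKA hK L hLB hL) le_rfl

lemma young {a b : ℝ≥0∞} {l : ℝ} (h0 : 0 < l) (h1 : l < 1) :
    a ^ (1 - l) * b ^ l ≤ ENNReal.ofReal (1 - l) * a + ENNReal.ofReal l * b := by
  have h2 : 0 < 1 - l := by linarith
  by_cases ha : a = ∞
  · rw [ha, ENNReal.mul_top (by simpa using h2)]; simp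
  by_cases hb : b = ∞
  · rw [hb, ENNReal.mul_top (by simpa using h0)]; simp
  lift a to ℝ≥0 using ha
  lift b to ℝ≥0 using hb
  have := NNReal.geom_mean_le_arith_mean2_weighted (1-l).toNNReal l.toNNReal a b (by
    rw [← Real.toNNReal_add h2.le h0.le]; simp)
  rw [Real.coe_toNNReal _ h2.le, Real.coe_toNNReal _ h0.le] at this
  rw [← ENNReal.coe_rpow_of_nonneg _ h2.le, ← ENNReal.coe_rpow_of_nonneg _ h0.le]
  simp only [ENNReal.ofReal]
  exact_mod_cast this

end BVaux

namespace BVaux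
open scoped ENNReal NNReal Pointwise

lemma pl1_norm {f g h : ℝ → ℝ≥0∞} (hf : Measurable f) (hg : Measurable g) (hh : Measurable h)
    {l : ℝ} (h0 : 0 < l) (h1 : l < 1)
    (hyp : ∀ x y, f x ^ (1 - l) * g y ^ l ≤ h ((1 - l) * x + l * y))
    (f1 : ∀ x, f x ≤ 1) (g1 : ∀ x, g x ≤ 1) (fs : ∀ t < 1, ∃ x, t < f x)
    (gs : ∀ t < 1, ∃ x, t < g x) :
    (∫⁻ x, f x) ^ (1 - l) * (∫⁻ x, g x) ^ l ≤ ∫⁻ x, h x := by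
  have h2 : 0 < 1 - l := by linarith
  refine (young h0 h1).trans ?_
  rw [layer volume f hf, layer volume g hg, layer volume h hh]
  rw [← lintegral_const_mul' _ _ ENNReal.ofReal_ne_top,
    ← lintegral_const_mul' _ _ ENNReal.ofReal_ne_top, ← lintegral_add_left']
  swap
  · apply AEMeasurable.const_mul
    refine (Antitone.measurable ?_).aemeasurable
    intro s t hst
    exact measure_mono fun x hx => lt_of_le_of_lt (ENNReal.ofReal_le_ofReal hst) hx
  refine lintegral_mono_ae ?_
  filter_upwards [self_mem_ae_restrict measurableSet_Ioi] with t ht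
  have ht : 0 < t := ht
  by_cases ht1 : t < 1
  · have ht1' : ENNReal.ofReal t < 1 := by simpa using ht1
    have e : ∀ (c : ℝ) (hc : 0 < c) (A : Set ℝ), ENNReal.ofReal c * volume A = volume (c • A) := by
      intro c hc A
      rw [Measure.addHaar_smul]; simp [abs_of_pos hc]
    rw [e _ h2, e _ h0]
    apply bm1
    · exact (measurableSet_lt measurable_const hf).const_smul₀ _
    · exact (measurableSet_lt measurable_const hg).const_smul₀ _
    · exact Set.Nonempty.smul_set (fs _ ht1')
    · exact Set.Nonempty.smul_set (gs _ ht1')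
    · rintro _ ⟨x, hx, rfl⟩ _ ⟨y, hy, rfl⟩
      refine lt_of_lt_of_le ?_ (hyp x y)
      have hx : ENNReal.ofReal t < f x := hx
      have hy : ENNReal.ofReal t < g y := hy
      calc ENNReal.ofReal t = ENNReal.ofReal t ^ (1 - l) * ENNReal.ofReal t ^ l := by
            rw [← ENNReal.rpow_add _ _ (by simpa using ht) (by simp)]; simp
        _ < _ := ENNReal.mul_lt_mul (ENNReal.rpow_lt_rpow hx h2) (ENNReal.rpow_lt_rpow hy h0)
  · have e : ∀ (f : ℝ → ℝ≥0∞) (f1 : ∀ x, f x ≤ 1), {x | ENNReal.ofReal t < f x} = ∅ := by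
      intro f f1
      ext x
      simp only [Set.mem_ofPred_eq, Set.mem_empty_iff_false, iff_false, not_lt]
      exact (f1 x).trans (by simpa using not_lt.1 ht1)
    simp [e f f1, e g g1]

lemma pl1_bdd {f g h : ℝ → ℝ≥0∞} (hf : Measurable f) (hg : Measurable g) (hh : Measurable h)
    {l : ℝ} (h0 : 0 < l) (h1 : l < 1)
    (hyp : ∀ x y, f x ^ (1 - l) * g y ^ l ≤ h ((1 - l) * x + l * y))
    {c : ℝ≥0∞} (hc : c ≠ ∞)
    (f1 : ∀ x, f x ≤ c) (g1 : ∀ x, g x ≤ c)  :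
    (∫⁻ x, f x) ^ (1 - l) * (∫⁻ x, g x) ^ l ≤ ∫⁻ x, h x := by
  have h2 : 0 < 1 - l := by linarith
  set F := ⨆ x, f x with hF
  set G := ⨆ x, g x with hG
  have Ft : F ≠ ∞ := ((iSup_le f1).trans_lt hc.lt_top).ne
  have Gt : G ≠ ∞ := ((iSup_le g1).trans_lt hc.lt_top).ne
  by_cases F0 : F = 0
  · have : ∀ x, f x = 0 := fun x => le_antisymm ((le_iSup f x).trans F0.le) bot_le
    simp [this, h2]
  by_cases G0 : G = 0
  · have : ∀ x, g x = 0 := fun x => le_antisymm ((le_iSup g x).trans G0.le) bot_le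
    simp [this, h0]
  have aux : ∀ (f : ℝ → ℝ≥0∞), (⨆ x, f x) ≠ 0 → (⨆ x, f x) ≠ ∞ →
    (∀ x, (⨆ x, f x)⁻¹ * f x ≤ 1) ∧ ∀ t < 1, ∃ x, t < (⨆ x, f x)⁻¹ * f x := by
    intro f F0 Ft
    constructor
    · intro x
      calc _ ≤ (⨆ x, f x)⁻¹ * (⨆ x, f x) := mul_le_mul_right (le_iSup f x) _
        _ = 1 := ENNReal.inv_mul_cancel F0 Ft
    · intro t ht
      have : t * (⨆ x, f x) < ⨆ x, f x := by
        conv_rhs => rw [← one_mul (⨆ x, f x)]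
        exact ENNReal.mul_lt_mul_left F0 Ft ht
      obtain ⟨x, hx⟩ := lt_iSup_iff.1 this
      refine ⟨x, ?_⟩
      rw [mul_comm, ← div_eq_mul_inv]
      exact (ENNReal.lt_div_iff_mul_lt (Or.inl F0) (Or.inl Ft)).2 hx
  obtain ⟨fa, fb⟩ := aux f F0 Ft
  obtain ⟨ga, gb⟩ := aux g G0 Gt
  have key := pl1_norm (f := fun x => F⁻¹ * f x) (g := fun x => G⁻¹ * g x)
    (h := fun x => (F⁻¹ ^ (1 - l) * G⁻¹ ^ l) * h x) (hf.const_mul _) (hg.const_mul _)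
    (hh.const_mul _) h0 h1 (by
      intro x y
      rw [ENNReal.mul_rpow_of_nonneg _ _ h2.le, ENNReal.mul_rpow_of_nonneg _ _ h0.le,
        mul_mul_mul_comm]
      exact mul_le_mul_right (hyp x y) _) fa ga fb gb
  rw [lintegral_const_mul _ hf, lintegral_const_mul _ hg, lintegral_const_mul _ hh,
    ENNReal.mul_rpow_of_nonneg _ _ h2.le, ENNReal.mul_rpow_of_nonneg _ _ h0.le,
        mul_mul_mul_comm] at key
  have hFi0 : F⁻¹ ≠ 0 := by simpa using Ft
  have hFit : F⁻¹ ≠ ∞ := by simpa using F0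
  have hGi0 : G⁻¹ ≠ 0 := by simpa using Gt
  have hGit : G⁻¹ ≠ ∞ := by simpa using G0
  refine (ENNReal.mul_le_mul_iff_right ?_ ?_).1 key
  · exact mul_ne_zero (by simp [ENNReal.rpow_eq_zero_iff, hFi0, hFit])
      (by simp [ENNReal.rpow_eq_zero_iff, Gt, hGit])
  · exact ENNReal.mul_ne_top (ENNReal.rpow_ne_top_of_nonneg h2.le hFit)
      (ENNReal.rpow_ne_top_of_nonneg h0.le hGit)

lemma pl1 {f g h : ℝ → ℝ≥0∞} (hf : Measurable f) (hg : Measurable g) (hh : Measurable h)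
    {l : ℝ} (h0 : 0 < l) (h1 : l < 1)
    (hyp : ∀ x y, f x ^ (1 - l) * g y ^ l ≤ h ((1 - l) * x + l * y)) :
    (∫⁻ x, f x) ^ (1 - l) * (∫⁻ x, g x) ^ l ≤ ∫⁻ x, h x := by
  have h2 : 0 < 1 - l := by linarith
  have lim : ∀ f : ℝ → ℝ≥0∞, Measurable f →
      (∫⁻ x, f x) = ⨆ n : ℕ, ∫⁻ x, min (f x) n := by
    intro f hf
    rw [← lintegral_iSup (fun n => hf.min measurable_const)]
    · congr 1; ext x
      rw [← inf_iSup_eq, ENNReal.iSup_natCast]; simp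
    · intro m n hmn x
      exact min_le_min le_rfl (by exact_mod_cast hmn)
  have mono : ∀ f : ℝ → ℝ≥0∞, Monotone fun n : ℕ => ∫⁻ x, min (f x) n := by
    intro f m n hmn
    exact lintegral_mono fun x => min_le_min le_rfl (by exact_mod_cast hmn)
  have mm : ∀ {s : ℝ}, 0 < s → ∀ a : ℕ → ℝ≥0∞, (⨆ n, a n) ^ s = ⨆ n, a n ^ s := by
    intro s hs a
    exact (ENNReal.orderIsoRpow s hs).map_iSup a
  have step : ∀ n : ℕ, (∫⁻ x, min (f x) n) ^ (1 - l) * (∫⁻ x, min (g x) n) ^ l ≤ ∫⁻ x, h x := by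
    intro n
    apply pl1_bdd (hf.min measurable_const) (hg.min measurable_const) hh h0 h1 _
      (ENNReal.natCast_ne_top n) (fun x => min_le_right _ _) (fun x => min_le_right _ _)
    intro x y
    refine le_trans (mul_le_mul' ?_ ?_) (hyp x y)
    · exact ENNReal.rpow_le_rpow (min_le_left _ _) h2.le
    · exact ENNReal.rpow_le_rpow (min_le_left _ _) h0.le
  rw [lim f hf, lim g hg, mm h2, mm h0, ENNReal.iSup_mul]
  refine iSup_le fun i => ?_
  rw [ENNReal.mul_iSup]
  refine iSup_le fun j => ?_
  exact (mul_le_mul' (ENNReal.rpow_le_rpow (mono f (le_max_left i j)) h2.le)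
      (ENNReal.rpow_le_rpow (mono g (le_max_right i j)) h0.le)).trans (step (max i j))

lemma piFin_symm {n : ℕ} (p : ℝ × (Fin n → ℝ)) :
    (MeasurableEquiv.piFinSuccAbove (fun _ : Fin (n+1) => ℝ) 0).symm p =
      (Fin.cons p.1 p.2 : Fin (n+1) → ℝ) := by
  simp [MeasurableEquiv.piFinSuccAbove, Fin.insertNthEquiv]

lemma lint_succ {n : ℕ} {f : (Fin (n+1) → ℝ) → ℝ≥0∞} (hf : Measurable f) :
    ∫⁻ x, f x = ∫⁻ s : ℝ, ∫⁻ y : Fin n → ℝ, f (Fin.cons s y) := by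
  have := (volume_preserving_piFinSuccAbove (fun _ : Fin (n+1) => ℝ) 0).symm.lintegral_comp hf
  rw [← this, Measure.volume_eq_prod, lintegral_prod]
  · simp only [piFin_symm]
  · exact (hf.comp (MeasurableEquiv.measurable _)).aemeasurable

lemma meas_cons {n : ℕ} : Measurable fun p : ℝ × (Fin n → ℝ) => (Fin.cons p.1 p.2 : Fin (n+1) → ℝ) := by
  have := (MeasurableEquiv.piFinSuccAbove (fun _ : Fin (n+1) => ℝ) 0).symm.measurable
  convert this using 2 with p
  exact (piFin_symm p).symm

/-- Prékopa–Leindler. -/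
lemma pl (n : ℕ) : ∀ {f g h : (Fin n → ℝ) → ℝ≥0∞}, Measurable f → Measurable g → Measurable h →
    ∀ {l : ℝ}, 0 < l → l < 1 →
    (∀ x y, f x ^ (1 - l) * g y ^ l ≤ h ((1 - l) • x + l • y)) →
    (∫⁻ x, f x) ^ (1 - l) * (∫⁻ x, g x) ^ l ≤ ∫⁻ x, h x := by
  induction n with
  | zero =>
    intro f g h hf hg hh l h0 h1 hyp
    have e : ∀ f : (Fin 0 → ℝ) → ℝ≥0∞, ∫⁻ x, f x = f 0 := by
      intro f
      rw [volume_pi, Measure.pi_of_empty (x := 0), lintegral_dirac]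
    rw [e, e, e]
    simpa using hyp 0 0
  | succ n ih =>
    intro f g h hf hg hh l h0 h1 hyp
    rw [lint_succ hf, lint_succ hg, lint_succ hh]
    have mm : ∀ f : (Fin (n+1) → ℝ) → ℝ≥0∞, Measurable f →
        Measurable fun s : ℝ => ∫⁻ y : Fin n → ℝ, f (Fin.cons s y) := by
      intro f hf
      exact Measurable.lintegral_prod_right' (hf.comp meas_cons)
    have mp : ∀ f : (Fin (n+1) → ℝ) → ℝ≥0∞, Measurable f → ∀ s : ℝ,
        Measurable fun y : Fin n → ℝ => f (Fin.cons s y) := by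
      intro f hf s
      exact (hf.comp meas_cons).comp measurable_prodMk_left
    apply pl1 (mm f hf) (mm g hg) (mm h hh) h0 h1
    intro s t
    apply ih (mp f hf s) (mp g hg t) (mp h hh _) h0 h1
    intro x y
    refine (hyp _ _).trans (le_of_eq ?_)
    congr 1
    ext i
    refine Fin.cases ?_ (fun j => ?_) i <;> simp

end BVaux

namespace BVaux
open scoped ENNReal NNReal Pointwise

lemma pl_euc {N : ℕ} {A B C : Set (Euc N)} (hA : MeasurableSet A) (hB : MeasurableSet B)
    (hC : MeasurableSet C) {l : ℝ} (h0 : 0 < l) (h1 : l < 1)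
    (hyp : ∀ x ∈ A, ∀ y ∈ B, (1 - l) • x + l • y ∈ C) :
    volume A ^ (1 - l) * volume B ^ l ≤ volume C := by
  have h2 : 0 < 1 - l := by linarith
  have mp := PiLp.volume_preserving_toLp (Fin N)
  have key := pl N (f := ((WithLp.toLp 2) ⁻¹' A).indicator 1)
    (g := ((WithLp.toLp 2) ⁻¹' B).indicator 1)
    (h := ((WithLp.toLp 2) ⁻¹' C).indicator 1)
    (measurable_one.indicator (mp.measurable hA)) (measurable_one.indicator (mp.measurable hB))
    (measurable_one.indicator (mp.measurable hC)) h0 h1 (by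
      intro x y
      by_cases hx : WithLp.toLp 2 x ∈ A
      swap
      · simp [Set.indicator, hx, h2]
      by_cases hy : WithLp.toLp 2 y ∈ B
      swap
      · simp [Set.indicator, hy, h0]
      have := hyp _ hx _ hy
      rw [← WithLp.toLp_smul, ← WithLp.toLp_smul, ← WithLp.toLp_add] at this
      simp only [Set.indicator, Set.mem_preimage, hx, hy, this]
      simp)
  rw [lintegral_indicator_one (mp.measurable hA), lintegral_indicator_one (mp.measurable hB),
    lintegral_indicator_one (mp.measurable hC), mp.measure_preimage hA.nullMeasurableSet,
    mp.measure_preimage hB.nullMeasurableSet, mp.measure_preimage hC.nullMeasurableSet] at key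
  exact key

/-- Volume of the unit ball. -/
def kap (N : ℕ) : ℝ := (volume (Metric.ball (0 : Euc N) 1)).toReal

lemma kap_pos (N : ℕ) : 0 < kap N := by
  apply ENNReal.toReal_pos
  · exact (Metric.measure_ball_pos volume _ one_pos).ne'
  · exact measure_ball_lt_top.ne

/-- The isoperimetric constant. -/
def cN (N : ℕ) : ℝ := N * kap N ^ (1 / (N:ℝ))

lemma cN_pos {N : ℕ} (hN : 2 ≤ N) : 0 < cN N := by
  have := kap_pos N
  unfold cN; positivity

lemma vol_ball {N : ℕ} (x : Euc N) {t : ℝ} (ht : 0 < t) :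
    volume (Metric.ball x t) = ENNReal.ofReal (t ^ N * kap N) := by
  rw [Measure.addHaar_ball_of_pos _ _ ht, ENNReal.ofReal_mul (by positivity), kap,
    ENNReal.ofReal_toReal measure_ball_lt_top.ne]
  simp

lemma bm_ball {N : ℕ} (hN : 2 ≤ N) {A C : Set (Euc N)} (hA : MeasurableSet A)
    (hC : MeasurableSet C) {t : ℝ} (ht : 0 < t)
    (h : ∀ x ∈ A, ∀ y ∈ Metric.ball (0 : Euc N) t, x + y ∈ C) :
    volume A + ENNReal.ofReal t * ENNReal.ofReal (cN N) * volume A ^ (((N:ℝ) - 1) / N)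
      ≤ volume C := by
  have hN1 : (1:ℝ) < N := by exact_mod_cast (by omega : 1 < N)
  have hN0 : (0:ℝ) < N := by linarith
  have hAC : A ⊆ C := fun x hx => by simpa using h x hx 0 (by simpa using ht)
  have hr : 0 < ((N:ℝ) - 1) / N := div_pos (by linarith) hN0
  by_cases hA0 : volume A = 0
  · simp [hA0, hr]
  by_cases hAt : volume A = ∞
  · have : volume C = ∞ := top_le_iff.1 (hAt ▸ measure_mono hAC)
    simp [this]
  set v := (volume A).toReal with hv
  have hvpos : 0 < v := ENNReal.toReal_pos hA0 hAt
  have hvA : volume A = ENNReal.ofReal v := (ENNReal.ofReal_toReal hAt).symm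
  set p := v ^ (1 / (N:ℝ)) with hp
  set β := kap N ^ (1 / (N:ℝ)) with hβ
  have ppos : 0 < p := by positivity
  have βpos : 0 < β := by have := kap_pos N; positivity
  have hpN : p ^ N = v := by
    rw [hp, ← Real.rpow_natCast, ← Real.rpow_mul hvpos.le]; field_simp; simp
  have hβN : β ^ N = kap N := by
    rw [hβ, ← Real.rpow_natCast, ← Real.rpow_mul (kap_pos N).le]; field_simp; simp
  set s := p + t * β with hs
  have spos : 0 < s := by positivity
  set l := t * β / s with hl
  have l0 : 0 < l := by positivity
  have l1 : l < 1 := by rw [hl, div_lt_one spos]; linarith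
  have hml : 1 - l = p / s := by rw [hl]; field_simp; linarith
  have m0 : 0 < 1 - l := by linarith
  have key := pl_euc (A := (1 - l)⁻¹ • A) (B := l⁻¹ • Metric.ball (0 : Euc N) t) (C := C)
    (hA.const_smul₀ _) (measurableSet_ball.const_smul₀ _) hC l0 l1 (by
      rintro _ ⟨x, hx, rfl⟩ _ ⟨y, hy, rfl⟩
      have := h x hx y hy
      simpa only [smul_smul, mul_inv_cancel₀ m0.ne', mul_inv_cancel₀ l0.ne', one_smul] using this)
  have e1 : volume ((1 - l)⁻¹ • A) = ENNReal.ofReal (s ^ N) := by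
    rw [Measure.addHaar_smul, hvA, ← ENNReal.ofReal_mul (abs_nonneg _), finrank_euclideanSpace,
      Fintype.card_fin, abs_of_pos (by positivity), hml, ← hpN, ← mul_pow]
    congr 2; field_simp
  have e2 : volume (l⁻¹ • Metric.ball (0 : Euc N) t) = ENNReal.ofReal (s ^ N) := by
    rw [Measure.addHaar_smul, vol_ball _ ht, ← ENNReal.ofReal_mul (abs_nonneg _),
      finrank_euclideanSpace,
      Fintype.card_fin, abs_of_pos (by positivity), hl, ← hβN, ← mul_pow, ← mul_pow]
    congr 2; field_simp
  rw [e1, e2, ← ENNReal.rpow_add _ _ (by simp; positivity) (by simp)] at key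
  simp only [sub_add_cancel, ENNReal.rpow_one] at key
  refine le_trans ?_ key
  have e3 : v ^ (((N:ℝ) - 1) / N) = p ^ (N - 1) := by
    rw [hp, ← Real.rpow_natCast, ← Real.rpow_mul hvpos.le]
    congr 1
    rw [Nat.cast_sub (by omega)]; push_cast; ring
  rw [hvA, ENNReal.ofReal_rpow_of_pos hvpos, ← ENNReal.ofReal_mul ht.le,
    ← ENNReal.ofReal_mul (by have := cN_pos hN; positivity),
    ← ENNReal.ofReal_add hvpos.le (by have := cN_pos hN; positivity)]
  apply ENNReal.ofReal_le_ofReal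
  rw [e3, ← hpN, cN, ← hβ, hs]
  have bern := one_add_mul_le_pow (a := t * β / p) (by
    have : 0 ≤ t * β / p := by positivity
    linarith) N
  have := mul_le_mul_of_nonneg_left bern (pow_pos ppos N).le
  rw [← mul_pow] at this
  have e4 : p * (1 + t * β / p) = p + t * β := by field_simp
  rw [e4] at this
  refine le_trans (le_of_eq ?_) this
  obtain ⟨m, rfl⟩ : ∃ m, N = m + 1 := ⟨N - 1, by omega⟩
  simp only [Nat.add_sub_cancel]
  field_simp
  ring

end BVaux

namespace BVaux
open scoped ENNReal NNReal Pointwise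

/-- `∫ g^p ≤ (∫ |{g>s}|^{1/p} ds)^p`. -/
lemma layer_holder {X : Type*} [MeasurableSpace X] (μ : Measure X) [SFinite μ] (g : X → ℝ≥0∞)
    (hg : Measurable g) {p : ℝ} (hp : 1 < p) (hfin : ∫⁻ x, g x ^ p ∂μ ≠ ∞) :
    (∫⁻ x, g x ^ p ∂μ) ^ (1 / p) ≤
      ∫⁻ t in Set.Ioi (0:ℝ), μ {x | ENNReal.ofReal t < g x} ^ (1 / p) := by
  set J := ∫⁻ x, g x ^ p ∂μ with hJ
  set I := ∫⁻ t in Set.Ioi (0:ℝ), μ {x | ENNReal.ofReal t < g x} ^ (1 / p) with hI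
  have p0 : 0 < p := by linarith
  have hp' : 0 < 1 / p := by positivity
  have hp1 : 1 / p < 1 := by rw [div_lt_one p0]; exact hp
  by_cases hJ0 : J = 0
  · rw [hJ0, ENNReal.zero_rpow_of_pos hp']; exact zero_le
  have h1 : J ≤ I * J ^ (1 - 1 / p) := by
    have e1 : J = ∫⁻ x, g x ∂(μ.withDensity (fun x => g x ^ (p - 1))) := by
      rw [lintegral_withDensity_eq_lintegral_mul _ (by fun_prop) hg]
      refine lintegral_congr fun x => ?_
      simp only [Pi.mul_apply]
      conv_rhs => rw [← ENNReal.rpow_one (g x), ← ENNReal.rpow_mul]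
      rw [← ENNReal.rpow_add_of_nonneg _ _ (by linarith) (by norm_num)]
      congr 1; ring
    have e3 : J = ∫⁻ t in Set.Ioi (0:ℝ),
        μ.withDensity (fun x => g x ^ (p - 1)) {x | ENNReal.ofReal t < g x} :=
      e1.trans (layer _ g hg)
    refine e3.le.trans ?_
    rw [hI]
    have hJt : J ^ (1 - 1 / p) ≠ ∞ := ENNReal.rpow_ne_top_of_nonneg (by linarith) hfin
    rw [← lintegral_mul_const' _ _ hJt]
    refine lintegral_mono fun t => ?_
    have hm : MeasurableSet {x | ENNReal.ofReal t < g x} := measurableSet_lt measurable_const hg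
    rw [withDensity_apply _ hm, ← lintegral_indicator hm, ← lintegral_indicator_one hm, hJ]
    refine le_trans (le_of_eq ?_) (ENNReal.lintegral_mul_norm_pow_le
      (measurable_one.indicator hm).aemeasurable (hg.pow_const p).aemeasurable
      hp'.le (by linarith) (by ring))
    refine lintegral_congr fun x => ?_
    rw [← ENNReal.rpow_mul]
    have e2 : p * (1 - 1 / p) = p - 1 := by field_simp
    rw [e2]
    by_cases hx : x ∈ {x | ENNReal.ofReal t < g x}
    · simp [Set.indicator_of_mem hx]
    · rw [Set.indicator_of_notMem hx, Set.indicator_of_notMem hx, ENNReal.zero_rpow_of_pos hp',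
        zero_mul]
  have h2 : J = J ^ (1 / p) * J ^ (1 - 1 / p) := by
    rw [← ENNReal.rpow_add _ _ hJ0 hfin]; simp
  refine (ENNReal.mul_le_mul_iff_left ?_ ?_).1 (h2.symm.le.trans h1)
  · simp [ENNReal.rpow_eq_zero_iff, hJ0, hfin]
  · exact ENNReal.rpow_ne_top_of_nonneg (by linarith) hfin

lemma sob_level {N : ℕ} (hN : 2 ≤ N) {f : Euc N → ℝ} (hf : ContDiff ℝ 1 f)
    (hc : HasCompactSupport f) :
    ENNReal.ofReal (cN N) * ∫⁻ t in Set.Ioi (0:ℝ),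
      volume {x | ENNReal.ofReal t < ‖f x‖ₑ} ^ (((N:ℝ) - 1) / N) ≤ ∫⁻ x, ‖fderiv ℝ f x‖ₑ := by
  set I := ∫⁻ t in Set.Ioi (0:ℝ),
      volume {x | ENNReal.ofReal t < ‖f x‖ₑ} ^ (((N:ℝ) - 1) / N) with hI
  set K := Metric.cthickening 1 (tsupport f) with hK
  have hKc : IsCompact K := IsCompact.cthickening hc
  have hcont : Continuous (fderiv ℝ f) := hf.continuous_fderiv one_ne_zero
  have huc : UniformContinuous (fderiv ℝ f) :=
    (hc.fderiv ℝ).uniformContinuous_of_continuous hcont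
  have hfc := hf.continuous
  have hgm : Measurable fun x => ‖f x‖ₑ := by fun_prop
  have hfm : Measurable fun x => ‖fderiv ℝ f x‖ₑ := hcont.enorm.measurable
  have hcp := cN_pos hN
  have hInt0 : ∫⁻ x, ‖f x‖ₑ ≠ ∞ := (hfc.integrable_of_hasCompactSupport hc).2.ne
  have step : ∀ ε : ℝ≥0, 0 < ε → ENNReal.ofReal (cN N) * I ≤
      (∫⁻ x, ‖fderiv ℝ f x‖ₑ) + ε * volume K := by
    intro ε hε
    obtain ⟨δ, hδ, hδ2⟩ := Metric.uniformContinuous_iff.1 huc ε hε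
    set t := min δ 1 with ht
    have t0 : 0 < t := lt_min hδ one_pos
    set G : Euc N → ℝ≥0∞ := fun x => ⨆ y ∈ Metric.ball x t, ‖f y‖ₑ with hG
    have hGset : ∀ s : ℝ≥0∞, {x | s < G x} = ⋃ y ∈ {y | s < ‖f y‖ₑ}, Metric.ball y t := by
      intro s; ext x
      simp only [hG, Set.mem_ofPred_eq, lt_iSup_iff, Set.mem_iUnion, exists_prop]
      constructor
      · rintro ⟨y, hy, h⟩; exact ⟨y, h, Metric.mem_ball_comm.1 hy⟩
      · rintro ⟨y, h, hy⟩; exact ⟨y, Metric.mem_ball_comm.1 hy, h⟩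
    have hGo : ∀ s, MeasurableSet {x | s < G x} := by
      intro s; rw [hGset]
      exact (isOpen_biUnion fun y _ => Metric.isOpen_ball).measurableSet
    have hGm : Measurable G := measurable_of_Ioi hGo
    have low : (∫⁻ x, ‖f x‖ₑ) + ENNReal.ofReal t * (ENNReal.ofReal (cN N) * I) ≤ ∫⁻ x, G x := by
      rw [layer _ _ hgm, layer _ _ hGm, hI, ← mul_assoc, ← lintegral_const_mul'
        _ _ (ENNReal.mul_ne_top ENNReal.ofReal_ne_top ENNReal.ofReal_ne_top), ← lintegral_add_left']
      swap
      · refine (Antitone.measurable ?_).aemeasurable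
        intro s t hst
        exact measure_mono fun x hx => lt_of_le_of_lt (ENNReal.ofReal_le_ofReal hst) hx
      refine lintegral_mono fun s => ?_
      refine bm_ball hN (measurableSet_lt measurable_const hgm) (hGo _) t0 ?_
      intro x hx y hy
      rw [hGset]
      simp only [Set.mem_iUnion]
      exact ⟨x, hx, by simpa [Metric.mem_ball, dist_eq_norm] using hy⟩
    have up : ∫⁻ x, G x ≤ (∫⁻ x, ‖f x‖ₑ) +
        ENNReal.ofReal t * ((∫⁻ x, ‖fderiv ℝ f x‖ₑ) + ε * volume K) := by
      rw [← lintegral_indicator_const hKc.measurableSet, ← lintegral_add_left hfm,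
        ← lintegral_const_mul' _ _ ENNReal.ofReal_ne_top,
        ← lintegral_add_left hgm]
      refine lintegral_mono fun x => ?_
      refine iSup₂_le fun y hy => ?_
      have hyx : dist y x < t := hy
      by_cases hx : x ∈ K
      · rw [Set.indicator_of_mem hx]
        have mv : ‖f y - f x‖ ≤ (‖fderiv ℝ f x‖ + ε) * ‖y - x‖ := by
          refine (convex_ball x t).norm_image_sub_le_of_norm_fderiv_le (𝕜 := ℝ) (f := f)
            (fun z _ => hf.differentiable one_ne_zero z) ?_ (Metric.mem_ball_self t0) hy
          intro z hz
          have := hδ2 (lt_of_lt_of_le hz (min_le_left _ _))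
          rw [dist_eq_norm] at this
          have h3 := norm_le_norm_add_norm_sub (fderiv ℝ f x) (fderiv ℝ f z)
          rw [norm_sub_rev] at h3
          linarith
        have : ‖f y‖ ≤ ‖f x‖ + t * (‖fderiv ℝ f x‖ + ε) := by
          have h3 := norm_le_norm_add_norm_sub (f x) (f y)
          rw [norm_sub_rev] at h3
          rw [dist_eq_norm] at hyx
          have : (‖fderiv ℝ f x‖ + ε) * ‖y - x‖ ≤ (‖fderiv ℝ f x‖ + ε) * t :=
            mul_le_mul_of_nonneg_left hyx.le (by positivity)
          linarith
        have h4 := ENNReal.ofReal_le_ofReal this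
        rw [ENNReal.ofReal_add (by positivity) (by positivity), ENNReal.ofReal_mul t0.le,
          ENNReal.ofReal_add (by positivity) (by positivity), ofReal_norm, ofReal_norm,
          ofReal_norm, ENNReal.ofReal_coe_nnreal] at h4
        exact h4
      · have : f y = 0 := by
          by_contra hne
          apply hx
          have hy2 : y ∈ tsupport f := subset_tsupport f hne
          refine Metric.mem_cthickening_of_dist_le x y 1 _ hy2 ?_
          rw [dist_comm]
          exact hyx.le.trans (min_le_right _ _)
        simp [this]
    have h5 := low.trans up
    rw [ENNReal.add_le_add_iff_left hInt0,
      ENNReal.mul_le_mul_iff_right (by simpa using t0) ENNReal.ofReal_ne_top] at h5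
    exact h5
  have hKt : volume K ≠ ∞ := hKc.measure_lt_top.ne
  refine ENNReal.le_of_forall_pos_le_add fun ε hε _ => ?_
  set k := (volume K).toNNReal with hk
  have := step (ε / (k + 1)) (by positivity)
  refine this.trans ?_
  gcongr
  rw [← ENNReal.coe_toNNReal hKt, ← hk]
  have : ε / (k + 1) * k ≤ ε := by
    rw [div_mul_eq_mul_div, div_le_iff₀ (by positivity)]
    gcongr; simp
  exact_mod_cast this

lemma sob_smooth {N : ℕ} (hN : 2 ≤ N) {f : Euc N → ℝ} (hf : ContDiff ℝ 1 f)
    (hc : HasCompactSupport f) :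
    ENNReal.ofReal (cN N) * (∫⁻ x, ‖f x‖ₑ ^ ((N:ℝ) / (N - 1))) ^ (((N:ℝ) - 1) / N)
      ≤ ∫⁻ x, ‖fderiv ℝ f x‖ₑ := by
  have hN1 : (1:ℝ) < N := by exact_mod_cast (by omega : 1 < N)
  have hp : 1 < (N:ℝ) / (N - 1) := by rw [one_lt_div (by linarith)]; linarith
  refine le_trans ?_ (sob_level hN hf hc)
  gcongr
  have e : ((N:ℝ) - 1) / N = 1 / ((N:ℝ) / (N - 1)) := by rw [one_div_div]
  rw [e]
  have hfc := hf.continuous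
  apply layer_holder _ _ (by fun_prop) hp
  have : Integrable (fun x => ‖f x‖ ^ ((N:ℝ) / (N - 1))) := by
    apply Continuous.integrable_of_hasCompactSupport
    · exact hfc.norm.rpow_const fun x => Or.inr (by linarith)
    · refine hc.comp_left (g := fun r : ℝ => ‖r‖ ^ ((N:ℝ) / (N - 1))) ?_
      simp only [norm_zero]; exact Real.zero_rpow (by linarith)
  have h2 := this.2.ne
  convert h2 using 3 with x
  have e5 : ‖‖f x‖ ^ ((N:ℝ) / (N - 1))‖ = ‖f x‖ ^ ((N:ℝ) / (N - 1)) :=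
    abs_of_nonneg (Real.rpow_nonneg (norm_nonneg _) _)
  show _ = ‖‖f x‖ ^ ((N:ℝ) / (N - 1))‖ₑ
  rw [← ofReal_norm, ← ofReal_norm, e5,
    ENNReal.ofReal_rpow_of_nonneg (norm_nonneg _) (by linarith)]

end BVaux

namespace BVaux
open scoped ENNReal NNReal Pointwise Convolution

/-- Divergence. -/
def dv {N : ℕ} (ψ : Euc N → Euc N) (x : Euc N) : ℝ :=
  ∑ i, fderiv ℝ (fun y => ψ y i) x (EuclideanSpace.single i 1)

lemma contDiff_coord {N : ℕ} {ψ : Euc N → Euc N} (h : ContDiff ℝ 1 ψ) (i : Fin N) :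
    ContDiff ℝ 1 fun y => ψ y i := contDiff_euclidean.1 h i

lemma compact_coord {N : ℕ} {ψ : Euc N → Euc N} (h : HasCompactSupport ψ) (i : Fin N) :
    HasCompactSupport fun y => ψ y i :=
  h.comp_left (g := fun v : Euc N => v i) (by simp)

lemma dv_cont {N : ℕ} {ψ : Euc N → Euc N} (h : ContDiff ℝ 1 ψ) : Continuous (dv ψ) := by
  unfold dv
  refine continuous_finsetSum _ fun i _ => ?_
  exact ((contDiff_coord h i).continuous_fderiv one_ne_zero).clm_apply continuous_const

lemma dv_compact {N : ℕ} {ψ : Euc N → Euc N} (h : HasCompactSupport ψ) :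
    HasCompactSupport (dv ψ) := by
  refine HasCompactSupport.intro (K := tsupport ψ) h fun x hx => ?_
  unfold dv
  refine Finset.sum_eq_zero fun i _ => ?_
  have : x ∉ tsupport fun y => ψ y i := fun h => hx (closure_mono (by
    intro y hy h0
    apply hy
    have h0 : ψ y = 0 := h0
    simp [h0]) h)
  rw [fderiv_of_notMem_tsupport (𝕜 := ℝ) this]; simp

lemma ibp {N : ℕ} {f : Euc N → ℝ} {ψ : Euc N → Euc N} (hf : ContDiff ℝ 1 f)
    (hfc : HasCompactSupport f) (h : ContDiff ℝ 1 ψ) :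
    ∫ x, f x * dv ψ x = - ∫ x, ∑ i, fderiv ℝ f x (EuclideanSpace.single i 1) * ψ x i := by
  have c1 : ∀ i, Continuous fun x => fderiv ℝ f x (EuclideanSpace.single i 1) := fun i =>
    (hf.continuous_fderiv one_ne_zero).clm_apply continuous_const
  have c2 : ∀ i, Continuous fun x => ψ x i := fun i => (contDiff_coord h i).continuous
  have c3 : ∀ i, Continuous fun x => fderiv ℝ (fun y => ψ y i) x (EuclideanSpace.single i 1) :=
    fun i => ((contDiff_coord h i).continuous_fderiv one_ne_zero).clm_apply continuous_const
  have i1 : ∀ i, Integrable fun x => fderiv ℝ f x (EuclideanSpace.single i 1) * ψ x i := fun i =>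
    ((c1 i).mul (c2 i)).integrable_of_hasCompactSupport
      (HasCompactSupport.mul_right (hfc.fderiv_apply ℝ _))
  have i2 : ∀ i, Integrable fun x => f x *
      fderiv ℝ (fun y => ψ y i) x (EuclideanSpace.single i 1) := fun i =>
    (hf.continuous.mul (c3 i)).integrable_of_hasCompactSupport hfc.mul_right
  have i3 : ∀ i, Integrable fun x => f x * ψ x i := fun i =>
    (hf.continuous.mul (c2 i)).integrable_of_hasCompactSupport hfc.mul_right
  simp only [dv, Finset.mul_sum]
  rw [integral_finsetSum _ fun i _ => i2 i, integral_finsetSum _ fun i _ => i1 i,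
    ← Finset.sum_neg_distrib]
  refine Finset.sum_congr rfl fun i _ => ?_
  exact integral_mul_fderiv_eq_neg_fderiv_mul_of_integrable (i1 i) (i2 i) (i3 i)
    (fun x _ => hf.differentiable one_ne_zero x)
    (fun x _ => (contDiff_coord h i).differentiable one_ne_zero x)

lemma grad_coord {N : ℕ} (L : Euc N →L[ℝ] ℝ) (i : Fin N) :
    ((InnerProductSpace.toDual ℝ (Euc N)).symm L) i = L (EuclideanSpace.single i 1) := by
  have := InnerProductSpace.toDual_symm_apply (𝕜 := ℝ) (x := EuclideanSpace.single i (1:ℝ)) (y := L)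
  rw [← this, EuclideanSpace.inner_single_right]; simp

lemma grad_le {N : ℕ} {f : Euc N → ℝ} (hf : ContDiff ℝ 2 f) (hc : HasCompactSupport f) {T : ℝ}
    (hT : ∀ r ∈ TVSet N f, r ≤ T) : ∫ x, ‖fderiv ℝ f x‖ ≤ T := by
  set g : Euc N → Euc N := fun x => (InnerProductSpace.toDual ℝ (Euc N)).symm (fderiv ℝ f x) with hg
  have hf1 : ContDiff ℝ 1 f := hf.of_le (by norm_num)
  have gn : ∀ x, ‖g x‖ = ‖fderiv ℝ f x‖ := fun x => by simp [hg]
  have gi : ∀ x i, g x i = fderiv ℝ f x (EuclideanSpace.single i 1) := fun x i => grad_coord _ i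
  have gC : ContDiff ℝ 1 g := by
    rw [contDiff_euclidean]
    intro i
    simp only [gi]
    exact (hf.fderiv_right (m := 1) (by norm_num)).clm_apply contDiff_const
  have gc : HasCompactSupport g :=
    (hc.fderiv ℝ).comp_left (g := fun L => (InnerProductSpace.toDual ℝ (Euc N)).symm L) (by simp)
  have hcontn : Continuous fun x => ‖fderiv ℝ f x‖ := (hf1.continuous_fderiv one_ne_zero).norm
  have hnint : Integrable fun x => ‖fderiv ℝ f x‖ :=
    hcontn.integrable_of_hasCompactSupport (hc.fderiv ℝ).norm
  have step : ∀ δ : ℝ, 0 < δ → ∫ x, ‖fderiv ℝ f x‖ ≤ T + δ * (volume (tsupport f)).toReal := by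
    intro δ hδ
    have pos : ∀ x, 0 < δ ^ 2 + ‖g x‖ ^ 2 := fun x => by positivity
    set w : Euc N → ℝ := fun x => (√(δ ^ 2 + ‖g x‖ ^ 2))⁻¹ with hw
    have wpos : ∀ x, 0 < w x := fun x => inv_pos.2 (Real.sqrt_pos.2 (pos x))
    have wC : ContDiff ℝ 1 w :=
      ((contDiff_const.add (gC.norm_sq ℝ)).sqrt fun x => (pos x).ne').inv
        fun x => (Real.sqrt_pos.2 (pos x)).ne'
    have key := hT _ ⟨fun x => -(w x • g x), (wC.smul gC).neg, (gc.smul_left (f := w)).neg, ?_, rfl⟩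
    swap
    · intro x
      rw [norm_neg, norm_smul, Real.norm_of_nonneg (wpos x).le, hw]
      simp only
      rw [inv_mul_le_iff₀ (Real.sqrt_pos.2 (pos x)), mul_one]
      apply Real.le_sqrt_of_sq_le; nlinarith
    have key2 := ibp (ψ := fun x => -(w x • g x)) hf1 hc (wC.smul gC).neg
    have key := key2.symm.le.trans key
    have e : ∀ x, ∑ i, fderiv ℝ f x (EuclideanSpace.single i 1) * (-(w x • g x)) i
        = - (w x * ‖g x‖ ^ 2) := by
      intro x
      rw [EuclideanSpace.norm_sq_eq, Finset.mul_sum, ← Finset.sum_neg_distrib]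
      refine Finset.sum_congr rfl fun i _ => ?_
      rw [← gi]
      simp [sq_abs]; ring
    have e' : (∫ x, ∑ i, fderiv ℝ f x (EuclideanSpace.single i 1) * (-(w x • g x)) i)
        = - ∫ x, w x * ‖g x‖ ^ 2 := by
      rw [← integral_neg]; exact integral_congr_ae (Eventually.of_forall e)
    have key3 : ∫ x, w x * ‖g x‖ ^ 2 ≤ T := by
      have : - - ∫ x, w x * ‖g x‖ ^ 2 ≤ T := by rw [← e']; exact key
      simpa using this
    have i1 : Integrable fun x => w x * ‖g x‖ ^ 2 := by
      apply Continuous.integrable_of_hasCompactSupport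
      · exact wC.continuous.mul (gC.continuous.norm.pow 2)
      · refine HasCompactSupport.mul_left ?_
        exact gc.comp_left (g := fun v : Euc N => ‖v‖ ^ 2) (by simp)
    have hS : MeasurableSet (tsupport f) := (isClosed_tsupport f).measurableSet
    have i2 : Integrable ((tsupport f).indicator fun _ => δ) := by
      rw [integrable_indicator_iff hS]
      exact integrableOn_const (hs := hc.measure_lt_top.ne)
    have : ∫ x, ‖fderiv ℝ f x‖ ≤ ∫ x, (w x * ‖g x‖ ^ 2 + (tsupport f).indicator (fun _ => δ) x) := by
      refine integral_mono hnint (i1.add i2) fun x => ?_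
      simp only
      by_cases hx : x ∈ tsupport f
      · rw [Set.indicator_of_mem hx, ← gn]
        set a := ‖g x‖
        have a0 : 0 ≤ a := norm_nonneg _
        have hsq : 0 < √(δ ^ 2 + a ^ 2) := Real.sqrt_pos.2 (by positivity)
        have hle : √(δ ^ 2 + a ^ 2) ≤ a + δ := by
          rw [Real.sqrt_le_left (by positivity)]; nlinarith
        have : a - δ ≤ w x * a ^ 2 := by
          show a - δ ≤ (√(δ ^ 2 + a ^ 2))⁻¹ * a ^ 2
          rw [le_inv_mul_iff₀ hsq]
          by_cases had : δ ≤ a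
          · nlinarith
          · nlinarith [mul_pos hsq (sub_pos.2 (not_le.1 had))]
        linarith
      · rw [Set.indicator_of_notMem hx, fderiv_of_notMem_tsupport (𝕜 := ℝ) hx]
        have := wpos x
        simp; positivity
    rw [integral_add i1 i2, integral_indicator_const _ hS] at this
    simp only [smul_eq_mul, Measure.real] at this
    linarith
  refine le_of_forall_pos_le_add fun ε hε => ?_
  set k := (volume (tsupport f)).toReal with hk
  have k0 : 0 ≤ k := ENNReal.toReal_nonneg
  refine (step (ε / (k + 1)) (by positivity)).trans ?_
  gcongr
  rw [div_mul_eq_mul_div, div_le_iff₀ (by positivity)]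
  gcongr; linarith

lemma sob_C2 {N : ℕ} (hN : 2 ≤ N) {f : Euc N → ℝ} (hf : ContDiff ℝ 2 f)
    (hc : HasCompactSupport f) {T : ℝ} (hT : ∀ r ∈ TVSet N f, r ≤ T) :
    ∫⁻ x, ‖f x‖ₑ ^ ((N:ℝ) / (N - 1)) ≤ ENNReal.ofReal (T / cN N) ^ ((N:ℝ) / (N - 1)) := by
  have hN1 : (1:ℝ) < N := by exact_mod_cast (by omega : 1 < N)
  have hp : 1 < (N:ℝ) / (N - 1) := by rw [one_lt_div (by linarith)]; linarith
  have hf1 : ContDiff ℝ 1 f := hf.of_le (by norm_num)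
  have h1 := sob_smooth hN hf1 hc
  have h2 := grad_le hf hc hT
  have hcontn : Continuous fun x => fderiv ℝ f x := (hf1.continuous_fderiv one_ne_zero)
  have hnint : Integrable fun x => fderiv ℝ f x :=
    hcontn.integrable_of_hasCompactSupport (hc.fderiv ℝ)
  have h3 : ∫⁻ x, ‖fderiv ℝ f x‖ₑ ≤ ENNReal.ofReal T := by
    rw [← ofReal_integral_norm_eq_lintegral_enorm hnint]
    exact ENNReal.ofReal_le_ofReal h2
  have h4 := h1.trans h3
  have hcp := cN_pos hN
  have h5 : (∫⁻ x, ‖f x‖ₑ ^ ((N:ℝ) / (N - 1))) ^ (((N:ℝ) - 1) / N) ≤ ENNReal.ofReal (T / cN N) := by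
    rw [ENNReal.ofReal_div_of_pos hcp, ENNReal.le_div_iff_mul_le
      (Or.inl (by simpa using hcp)) (Or.inl ENNReal.ofReal_ne_top), mul_comm]
    exact h4
  have h6 := ENNReal.rpow_le_rpow h5 (by linarith : 0 ≤ (N:ℝ) / (N - 1))
  rw [← ENNReal.rpow_mul] at h6
  have e : ((N:ℝ) - 1) / N * (N / (N - 1)) = 1 := by
    have : (N:ℝ) - 1 ≠ 0 := by linarith
    field_simp
  rwa [e, ENNReal.rpow_one] at h6

end BVaux

namespace BVaux
open scoped ENNReal NNReal Pointwise Convolution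

lemma dv_translate {N : ℕ} (ψ : Euc N → Euc N) (t x : Euc N) :
    dv (fun y => ψ (y + t)) x = dv ψ (x + t) := by
  unfold dv
  refine Finset.sum_congr rfl fun i _ => ?_
  rw [fderiv_comp_add_right (f := fun y => ψ y i)]

lemma tv_moll {N : ℕ} {u : Euc N → ℝ} (hu : Integrable u) {T : ℝ}
    (hT : ∀ r ∈ TVSet N u, r ≤ T) (φ : ContDiffBump (0 : Euc N)) :
    ∀ r ∈ TVSet N (φ.normed volume ⋆[ContinuousLinearMap.lsmul ℝ ℝ, volume] u), r ≤ T := by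
  rintro _ ⟨ψ, hψ, hψc, hψ1, rfl⟩
  have hD := dv_cont hψ
  have hDc := dv_compact hψc
  obtain ⟨C, hC⟩ := hD.bounded_above_of_compact_support hDc
  have hφi : Integrable (φ.normed volume) := φ.integrable_normed
  have hInt0 : Integrable (fun p : Euc N × Euc N => φ.normed volume p.2 * u (p.1 - p.2) * dv ψ p.1)
      (volume.prod volume) := by
    have := hφi.convolution_integrand (ContinuousLinearMap.lsmul ℝ ℝ) hu
    simp only [ContinuousLinearMap.lsmul_apply, smul_eq_mul] at this
    exact this.mul_bdd (c := C) (hD.comp continuous_fst).aestronglyMeasurable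
      (Eventually.of_forall fun p => hC _)
  have e1 : ∫ x, (φ.normed volume ⋆[ContinuousLinearMap.lsmul ℝ ℝ, volume] u) x *
      (∑ i, fderiv ℝ (fun y => ψ y i) x (EuclideanSpace.single i 1)) =
      ∫ x, ∫ t, φ.normed volume t * u (x - t) * dv ψ x := by
    refine integral_congr_ae (Eventually.of_forall fun x => ?_)
    simp only [convolution, ContinuousLinearMap.lsmul_apply, smul_eq_mul]
    rw [integral_mul_const]; rfl
  rw [e1, integral_integral_swap hInt0]
  have inner : ∀ t, ∫ x, φ.normed volume t * u (x - t) * dv ψ x ≤ φ.normed volume t * T := by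
    intro t
    simp only [mul_assoc]
    rw [integral_const_mul]
    refine mul_le_mul_of_nonneg_left ?_ (φ.nonneg_normed t)
    have : ∫ x, u (x - t) * dv ψ x = ∫ x, u x * dv ψ (x + t) := by
      rw [← integral_add_right_eq_self _ t]; simp
    rw [this]
    apply hT
    refine ⟨fun y => ψ (y + t), hψ.comp (contDiff_id.add contDiff_const), ?_, fun x => hψ1 _, ?_⟩
    · exact hψc.comp_homeomorph (Homeomorph.addRight t)
    · simp only [← dv_translate]; rfl
  calc _ ≤ ∫ t, φ.normed volume t * T :=
        integral_mono hInt0.integral_prod_right (hφi.mul_const _) inner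
    _ = T := by rw [integral_mul_const, φ.integral_normed, one_mul]

lemma fatou_aux {N : ℕ} {p : ℝ} {u : Euc N → ℝ} {f : ℕ → Euc N → ℝ}
    (hm : ∀ k, AEStronglyMeasurable (f k) volume)
    (hlim : ∀ᵐ x, Tendsto (fun k => f k x) atTop (𝓝 (u x))) {B : ℕ → ℝ≥0∞} {B0 : ℝ≥0∞}
    (hB : ∀ k, ∫⁻ x, ‖f k x‖ₑ ^ p ≤ B k) (hB0 : Tendsto B atTop (𝓝 B0)) :
    ∫⁻ x, ‖u x‖ₑ ^ p ≤ B0 := by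
  calc ∫⁻ x, ‖u x‖ₑ ^ p = ∫⁻ x, liminf (fun k => ‖f k x‖ₑ ^ p) atTop := by
        refine lintegral_congr_ae ?_
        filter_upwards [hlim] with x hx
        exact ((((ENNReal.continuous_rpow_const (y := p)).comp continuous_enorm).tendsto _).comp
          hx).liminf_eq.symm
    _ ≤ liminf (fun k => ∫⁻ x, ‖f k x‖ₑ ^ p) atTop :=
        lintegral_liminf_le' fun k => (hm k).enorm.pow_const _
    _ ≤ liminf B atTop := liminf_le_liminf (Eventually.of_forall hB)
    _ = B0 := hB0.liminf_eq

lemma sob_compact {N : ℕ} (hN : 2 ≤ N) {u : Euc N → ℝ} (hu : Integrable u)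
    (hc : HasCompactSupport u) {T : ℝ} (hT : ∀ r ∈ TVSet N u, r ≤ T) :
    ∫⁻ x, ‖u x‖ₑ ^ ((N:ℝ) / (N - 1)) ≤ ENNReal.ofReal (T / cN N) ^ ((N:ℝ) / (N - 1)) := by
  have hN1 : (1:ℝ) < N := by exact_mod_cast (by omega : 1 < N)
  have hp : 1 < (N:ℝ) / (N - 1) := by rw [one_lt_div (by linarith)]; linarith
  let φ : ℕ → ContDiffBump (0 : Euc N) := fun k =>
    ⟨1 / ((k:ℝ) + 1), 2 * (1 / ((k:ℝ) + 1)), by positivity, by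
      have : 0 < 1 / ((k:ℝ) + 1) := by positivity
      linarith⟩
  have hlim := ContDiffBump.ae_convolution_tendsto_right_of_locallyIntegrable (μ := volume)
    (φ := φ) (l := atTop) (K := 2) (g := u) (by
      have := (tendsto_one_div_add_atTop_nhds_zero_nat (𝕜 := ℝ)).const_mul 2
      rw [mul_zero] at this; exact this) (Eventually.of_forall fun k => le_rfl) hu.locallyIntegrable
  have hcd : ∀ k, ContDiff ℝ 2 ((φ k).normed volume ⋆[ContinuousLinearMap.lsmul ℝ ℝ, volume] u) :=
    fun k => (φ k).hasCompactSupport_normed.contDiff_convolution_left _ (φ k).contDiff_normed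
      hu.locallyIntegrable
  refine fatou_aux (fun k => (hcd k).continuous.aestronglyMeasurable) hlim
    (fun k => sob_C2 hN (hcd k) ?_ (tv_moll hu hT (φ k))) tendsto_const_nhds
  exact HasCompactSupport.convolution _ (φ k).hasCompactSupport_normed hc

lemma tv_nonneg {N : ℕ} {u : Euc N → ℝ} {T : ℝ} (hT : ∀ r ∈ TVSet N u, r ≤ T) : 0 ≤ T :=
  hT 0 ⟨0, contDiff_const, HasCompactSupport.zero, by simp, by simp⟩

lemma tv_cut {N : ℕ} {u : Euc N → ℝ} (hu : Integrable u) {T : ℝ}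
    (hT : ∀ r ∈ TVSet N u, r ≤ T) {χ : Euc N → ℝ} (hχ : ContDiff ℝ 1 χ) (h0 : ∀ x, 0 ≤ χ x)
    (h1 : ∀ x, χ x ≤ 1) {M : ℝ} (hM : ∀ x, ‖fderiv ℝ χ x‖ ≤ M) :
    ∀ r ∈ TVSet N (fun x => χ x * u x), r ≤ T + M * ∫ x, ‖u x‖ := by
  rintro _ ⟨ψ, hψ, hψc, hψ1, rfl⟩
  have hD := dv_cont (hχ.smul hψ)
  have hDc := dv_compact (hψc.smul_left (f := χ))
  obtain ⟨C, hC⟩ := hD.bounded_above_of_compact_support hDc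
  have e : ∀ x, dv (χ • ψ) x = χ x * dv ψ x + fderiv ℝ χ x (ψ x) := by
    intro x
    have e1 : ψ x = ∑ i, ψ x i • EuclideanSpace.single i (1:ℝ) := by
      have := (EuclideanSpace.basisFun (Fin N) ℝ).sum_repr (ψ x)
      simpa using this.symm
    conv_rhs => rw [e1, map_sum]
    unfold dv
    rw [Finset.mul_sum, ← Finset.sum_add_distrib]
    refine Finset.sum_congr rfl fun i _ => ?_
    have : (fun y => (χ • ψ) y i) = fun y => χ y * ψ y i := by ext y; simp
    rw [this, fderiv_fun_mul (hχ.differentiable one_ne_zero x)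
      ((contDiff_coord hψ i).differentiable one_ne_zero x)]
    simp
  have gcont : Continuous fun x => fderiv ℝ χ x (ψ x) :=
    (hχ.continuous_fderiv one_ne_zero).clm_apply hψ.continuous
  have gb : ∀ x, ‖fderiv ℝ χ x (ψ x)‖ ≤ M := fun x =>
    ((fderiv ℝ χ x).le_opNorm _).trans (by
      have := hM x
      have := hψ1 x
      nlinarith [norm_nonneg (fderiv ℝ χ x), norm_nonneg (ψ x)])
  have i1 : Integrable fun x => u x * dv (χ • ψ) x :=
    hu.mul_bdd (c := C) hD.aestronglyMeasurable (Eventually.of_forall hC)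
  have i2 : Integrable fun x => u x * fderiv ℝ χ x (ψ x) :=
    hu.mul_bdd (c := M) gcont.aestronglyMeasurable (Eventually.of_forall gb)
  have e2 : ∫ x, χ x * u x * (∑ i, fderiv ℝ (fun y => ψ y i) x (EuclideanSpace.single i 1)) =
      (∫ x, u x * dv (χ • ψ) x) - ∫ x, u x * fderiv ℝ χ x (ψ x) := by
    rw [← integral_sub i1 i2]
    refine integral_congr_ae (Eventually.of_forall fun x => ?_)
    simp only [e]
    unfold dv; ring
  rw [e2]
  have b1 : ∫ x, u x * dv (χ • ψ) x ≤ T := by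
    apply hT
    refine ⟨χ • ψ, hχ.smul hψ, hψc.smul_left, fun x => ?_, rfl⟩
    rw [Pi.smul_apply', norm_smul, Real.norm_of_nonneg (h0 x)]
    have := hψ1 x
    have := h1 x
    have := h0 x
    nlinarith [norm_nonneg (ψ x)]
  have b2 : - ∫ x, u x * fderiv ℝ χ x (ψ x) ≤ M * ∫ x, ‖u x‖ := by
    rw [← integral_neg, ← integral_const_mul]
    refine integral_mono i2.neg (hu.norm.const_mul _) fun x => ?_
    simp only
    refine (neg_le_abs _).trans ?_
    rw [← Real.norm_eq_abs, norm_mul, mul_comm]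
    exact mul_le_mul_of_nonneg_right (gb x) (norm_nonneg _)
  linarith

/-- Sharp Sobolev inequality on `BV`. -/
lemma sob_bv {N : ℕ} (hN : 2 ≤ N) {u : Euc N → ℝ} (hu : Integrable u)
    {T : ℝ} (hT : ∀ r ∈ TVSet N u, r ≤ T) :
    ∫⁻ x, ‖u x‖ₑ ^ ((N:ℝ) / (N - 1)) ≤ ENNReal.ofReal (T / cN N) ^ ((N:ℝ) / (N - 1)) := by
  have hN1 : (1:ℝ) < N := by exact_mod_cast (by omega : 1 < N)
  have hp : 1 < (N:ℝ) / (N - 1) := by rw [one_lt_div (by linarith)]; linarith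
  let χ : ContDiffBump (0 : Euc N) := ⟨1, 2, one_pos, one_lt_two⟩
  have hχC : ContDiff ℝ 1 χ := χ.contDiff
  have hχc : HasCompactSupport χ := χ.hasCompactSupport
  obtain ⟨M, hM⟩ := (hχC.continuous_fderiv one_ne_zero).bounded_above_of_compact_support
    (hχc.fderiv ℝ)
  let s : ℕ → ℝ := fun k => 1 / ((k:ℝ) + 1)
  have s0 : ∀ k, 0 < s k := fun k => by positivity
  have slim : Tendsto s atTop (𝓝 0) := tendsto_one_div_add_atTop_nhds_zero_nat (𝕜 := ℝ)
  have hC : ∀ k, ContDiff ℝ 1 fun x : Euc N => χ (s k • x) := fun k =>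
    hχC.comp (contDiff_const_smul (s k))
  have hc : ∀ k, HasCompactSupport fun x : Euc N => χ (s k • x) := fun k =>
    hχc.comp_smul (s0 k).ne'
  have hb : ∀ k (x : Euc N), ‖fderiv ℝ (fun x : Euc N => χ (s k • x)) x‖ ≤ s k * M := by
    intro k x
    rw [fderiv_comp_smul, norm_smul, Real.norm_of_nonneg (s0 k).le]
    exact mul_le_mul_of_nonneg_left (hM _) (s0 k).le
  have hi : ∀ k, Integrable fun x => χ (s k • x) * u x := fun k =>
    hu.bdd_mul (c := 1) (hC k).continuous.aestronglyMeasurable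
      (Eventually.of_forall fun x => by
        rw [Real.norm_of_nonneg χ.nonneg]; exact χ.le_one)
  refine fatou_aux (f := fun k x => χ (s k • x) * u x)
    (B := fun k => ENNReal.ofReal ((T + s k * M * ∫ x, ‖u x‖) / cN N) ^ ((N:ℝ) / (N - 1)))
    (fun k => (hi k).aestronglyMeasurable) (Eventually.of_forall fun x => ?_)
    (fun k => sob_compact hN (hi k) (hc k).mul_right
      (tv_cut hu hT (hC k) (fun x => χ.nonneg) (fun x => χ.le_one) (hb k))) ?_
  · refine tendsto_const_nhds.congr' ?_
    have h1 : Tendsto (fun k => s k • x) atTop (𝓝 0) := by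
      simpa using slim.smul_const x
    filter_upwards [h1.eventually (Metric.ball_mem_nhds 0 one_pos)] with k hk
    rw [χ.one_of_mem_closedBall (Metric.ball_subset_closedBall hk), one_mul]
  · refine ((ENNReal.continuous_rpow_const (y := (N:ℝ) / (N - 1))).tendsto _).comp ?_
    refine (ENNReal.continuous_ofReal.tendsto _).comp ?_
    have : Tendsto (fun k => (T + s k * M * ∫ x, ‖u x‖) / cN N) atTop
        (𝓝 ((T + 0 * M * ∫ x, ‖u x‖) / cN N)) :=
      (tendsto_const_nhds.add ((slim.mul_const M).mul_const _)).div_const _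
    simpa using this

end BVaux

namespace BVaux
open scoped ENNReal NNReal Pointwise Convolution

/-- Lipschitz cutoff of a ball. -/
def cut {N : ℕ} (r ε : ℝ) (x : Euc N) : ℝ := max 0 (min 1 ((r + ε - ‖x‖) / ε))

lemma cut_lip {N : ℕ} (r : ℝ) {ε : ℝ} (hε : 0 < ε) :
    LipschitzWith (Real.toNNReal (1 / ε)) (cut r ε : Euc N → ℝ) := by
  unfold cut
  apply LipschitzWith.const_max
  apply LipschitzWith.const_min
  apply LipschitzWith.of_dist_le_mul
  intro x y
  rw [Real.dist_eq, dist_eq_norm, Real.coe_toNNReal _ (by positivity)]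
  have : (r + ε - ‖x‖) / ε - (r + ε - ‖y‖) / ε = 1 / ε * (‖y‖ - ‖x‖) := by field_simp; ring
  rw [this, abs_mul, abs_of_pos (by positivity)]
  refine mul_le_mul_of_nonneg_left ?_ (by positivity)
  rw [norm_sub_rev]
  exact abs_norm_sub_norm_le y x

lemma cut_one {N : ℕ} {r ε : ℝ} (hε : 0 < ε) {x : Euc N} (hx : ‖x‖ ≤ r) : cut r ε x = 1 := by
  unfold cut
  have : 1 ≤ (r + ε - ‖x‖) / ε := by rw [le_div_iff₀ hε]; linarith
  rw [min_eq_left this]; simp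

lemma cut_zero {N : ℕ} {r ε : ℝ} (hε : 0 < ε) {x : Euc N} (hx : r + ε ≤ ‖x‖) : cut r ε x = 0 := by
  unfold cut
  have : (r + ε - ‖x‖) / ε ≤ 0 := div_nonpos_of_nonpos_of_nonneg (by linarith) hε.le
  rw [max_eq_left]; exact (min_le_right _ _).trans this

lemma cut_bd {N : ℕ} (r ε : ℝ) (x : Euc N) : ‖cut r ε x‖ ≤ 1 := by
  unfold cut
  rw [Real.norm_of_nonneg (le_max_left _ _)]
  exact max_le zero_le_one (min_le_left _ _)

lemma vol_cball {N : ℕ} (x : Euc N) {t : ℝ} (ht : 0 < t) :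
    volume (Metric.closedBall x t) = ENNReal.ofReal (t ^ N * kap N) := by
  rw [Measure.addHaar_closedBall _ _ ht.le, ENNReal.ofReal_mul (by positivity), kap,
    ENNReal.ofReal_toReal measure_ball_lt_top.ne]
  simp

lemma cut_tv {N : ℕ} {r ε : ℝ} (hr : 0 < r) (hε : 0 < ε) {ψ : Euc N → Euc N}
    (hψ : ContDiff ℝ 1 ψ) (hψc : HasCompactSupport ψ) (hψ1 : ∀ x, ‖ψ x‖ ≤ 1) :
    ∫ x, cut r ε x * dv ψ x ≤ (1 / ε) * ((r + ε) ^ N * kap N - r ^ N * kap N) := by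
  have hL := cut_lip (N := N) r hε
  set f : Euc N → ℝ := cut r ε with hf
  have hψL : ∀ i, ∃ D, LipschitzWith D fun x => ψ x i := fun i =>
    (contDiff_coord hψ i).lipschitzWith_of_hasCompactSupport (compact_coord hψc i) one_ne_zero
  have c3 : ∀ i, Continuous fun x => fderiv ℝ (fun y => ψ y i) x (EuclideanSpace.single i 1) :=
    fun i => ((contDiff_coord hψ i).continuous_fderiv one_ne_zero).clm_apply continuous_const
  have i2 : ∀ i, Integrable fun x => f x *
      fderiv ℝ (fun y => ψ y i) x (EuclideanSpace.single i 1) := fun i =>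
    (hL.continuous.mul (c3 i)).integrable_of_hasCompactSupport
      (HasCompactSupport.mul_left ((compact_coord hψc i).fderiv_apply ℝ _))
  have i1 : ∀ i, Integrable fun x => lineDeriv ℝ f x (EuclideanSpace.single i 1) * ψ x i := by
    intro i
    refine Integrable.bdd_mul (c := 1 / ε) ?_ ?_ ?_
    · exact (contDiff_coord hψ i).continuous.integrable_of_hasCompactSupport (compact_coord hψc i)
    · exact (measurable_lineDeriv hL.continuous).aestronglyMeasurable
    · refine Eventually.of_forall fun x => ?_
      have := norm_lineDeriv_le_of_lipschitz ℝ hL (x₀ := x) (v := EuclideanSpace.single i (1:ℝ))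
      rw [Real.coe_toNNReal _ (by positivity)] at this
      simpa using this
  have e1 : ∫ x, f x * dv ψ x =
      - ∫ x, ∑ i, lineDeriv ℝ f x (EuclideanSpace.single i 1) * ψ x i := by
    simp only [dv, Finset.mul_sum]
    rw [integral_finsetSum _ fun i _ => i2 i, integral_finsetSum _ fun i _ => i1 i,
      ← Finset.sum_neg_distrib]
    refine Finset.sum_congr rfl fun i _ => ?_
    obtain ⟨D, hD⟩ := hψL i
    have := LipschitzWith.integral_lineDeriv_mul_eq (μ := volume) hL hD (compact_coord hψc i)
      (EuclideanSpace.single i (1:ℝ))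
    rw [this, ← integral_neg]
    refine integral_congr_ae (Eventually.of_forall fun x => ?_)
    simp only
    rw [DifferentiableAt.lineDeriv_eq_fderiv
      ((contDiff_coord hψ i).differentiable one_ne_zero x), map_neg]
    ring
  have hae := hL.ae_differentiableAt (μ := volume)
  set S : Set (Euc N) := Metric.closedBall 0 (r + ε) \ Metric.ball 0 r with hS
  have hSm : MeasurableSet S := Metric.isClosed_closedBall.measurableSet.diff measurableSet_ball
  have hSv : volume S = ENNReal.ofReal ((r + ε) ^ N * kap N - r ^ N * kap N) := by
    rw [hS, measure_sdiff ?_ measurableSet_ball.nullMeasurableSet measure_ball_lt_top.ne,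
      vol_cball _ (by positivity), vol_ball _ hr, ENNReal.ofReal_sub]
    · have := kap_pos N; positivity
    · exact (Metric.ball_subset_closedBall).trans (Metric.closedBall_subset_closedBall (by linarith))
  have hnn : 0 ≤ (r + ε) ^ N * kap N - r ^ N * kap N := by
    have := kap_pos N
    have : r ^ N ≤ (r + ε) ^ N := pow_le_pow_left₀ hr.le (by linarith) N
    nlinarith
  have hSfin : volume S ≠ ∞ := by rw [hSv]; exact ENNReal.ofReal_ne_top
  rw [e1, ← integral_neg]
  have b : ∫ x, -∑ i, lineDeriv ℝ f x (EuclideanSpace.single i 1) * ψ x i ≤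
      ∫ x, S.indicator (fun _ => 1 / ε) x := by
    refine integral_mono_ae (integrable_finsetSum _ fun i _ => i1 i).neg ?_ ?_
    · rw [integrable_indicator_iff hSm]
      exact integrableOn_const (hs := hSfin)
    filter_upwards [hae] with x hx
    have e2 : ∑ i, lineDeriv ℝ f x (EuclideanSpace.single i 1) * ψ x i = fderiv ℝ f x (ψ x) := by
      have e1 : ψ x = ∑ i, ψ x i • EuclideanSpace.single i (1:ℝ) := by
        have := (EuclideanSpace.basisFun (Fin N) ℝ).sum_repr (ψ x)
        simpa using this.symm
      conv_rhs => rw [e1, map_sum]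
      refine Finset.sum_congr rfl fun i _ => ?_
      rw [hx.lineDeriv_eq_fderiv, map_smul, smul_eq_mul, mul_comm]
    rw [e2]
    by_cases hxS : x ∈ S
    · rw [Set.indicator_of_mem hxS]
      have h1 := norm_fderiv_le_of_lipschitz ℝ hL (x₀ := x)
      rw [Real.coe_toNNReal _ (by positivity)] at h1
      refine (neg_le_abs _).trans ?_
      rw [← Real.norm_eq_abs]
      refine ((fderiv ℝ f x).le_opNorm _).trans ?_
      have := hψ1 x
      nlinarith [norm_nonneg (fderiv ℝ f x), norm_nonneg (ψ x)]
    · rw [Set.indicator_of_notMem hxS]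
      have : fderiv ℝ f x = 0 := by
        by_cases hxr : ‖x‖ < r
        · have : f =ᶠ[𝓝 x] fun _ => 1 := by
            filter_upwards [Metric.isOpen_ball.mem_nhds (show x ∈ Metric.ball 0 r by simpa using hxr)]
              with y hy
            exact cut_one hε (by simpa using (Metric.mem_ball.1 hy).le)
          rw [this.fderiv_eq]; simp
        · have hxr2 : r + ε < ‖x‖ := by
            by_contra h
            apply hxS
            simp only [hS, Set.mem_sdiff, mem_closedBall_zero_iff, mem_ball_zero_iff]
            exact ⟨not_lt.1 h, hxr⟩
          have : f =ᶠ[𝓝 x] fun _ => 0 := by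
            filter_upwards [(isOpen_lt continuous_const continuous_norm).mem_nhds hxr2] with y hy
            exact cut_zero hε (le_of_lt hy)
          rw [this.fderiv_eq]; simp
      simp [this]
  refine b.trans (le_of_eq ?_)
  rw [integral_indicator_const _ hSm, Measure.real, hSv, ENNReal.toReal_ofReal hnn, smul_eq_mul,
    mul_comm]

lemma ball_tv_le {N : ℕ} {r : ℝ} (hr : 0 < r) {ψ : Euc N → Euc N}
    (hψ : ContDiff ℝ 1 ψ) (hψc : HasCompactSupport ψ) (hψ1 : ∀ x, ‖ψ x‖ ≤ 1) :
    ∫ x, (Metric.closedBall (0 : Euc N) r).indicator (fun _ => (1:ℝ)) x * dv ψ x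
      ≤ N * r ^ (N - 1) * kap N := by
  let s : ℕ → ℝ := fun k => 1 / ((k:ℝ) + 1)
  have s0 : ∀ k, 0 < s k := fun k => by positivity
  have slim : Tendsto s atTop (𝓝 0) := tendsto_one_div_add_atTop_nhds_zero_nat (𝕜 := ℝ)
  have hDi : Integrable (dv ψ) :=
    (dv_cont hψ).integrable_of_hasCompactSupport (dv_compact hψc)
  have L1 : Tendsto (fun k => ∫ x, cut r (s k) x * dv ψ x) atTop
      (𝓝 (∫ x, (Metric.closedBall (0 : Euc N) r).indicator (fun _ => (1:ℝ)) x * dv ψ x)) := by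
    refine tendsto_integral_of_dominated_convergence (fun x => ‖dv ψ x‖) (fun k => ?_) hDi.norm
      (fun k => Eventually.of_forall fun x => ?_) (Eventually.of_forall fun x => ?_)
    · exact ((cut_lip r (s0 k)).continuous.mul (dv_cont hψ)).aestronglyMeasurable
    · rw [norm_mul]
      exact mul_le_of_le_one_left (norm_nonneg _) (cut_bd _ _ _)
    · refine Tendsto.mul_const _ ?_
      by_cases hx : ‖x‖ ≤ r
      · rw [Set.indicator_of_mem (by simpa using hx)]
        exact tendsto_const_nhds.congr fun k => (cut_one (s0 k) hx).symm
      · rw [Set.indicator_of_notMem (by simpa using hx)]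
        refine tendsto_const_nhds.congr' ?_
        have : 0 < ‖x‖ - r := by linarith [not_le.1 hx]
        filter_upwards [slim.eventually (gt_mem_nhds this)] with k hk
        exact (cut_zero (s0 k) (by linarith)).symm
  have L2 : Tendsto (fun k => (1 / s k) * ((r + s k) ^ N * kap N - r ^ N * kap N)) atTop
      (𝓝 (N * r ^ (N - 1) * kap N)) := by
    have hd : HasDerivAt (fun t : ℝ => t ^ N * kap N) (N * r ^ (N - 1) * kap N) r :=
      (hasDerivAt_pow N r).mul_const _
    have := hd.tendsto_slope_zero
    have h2 : Tendsto s atTop (𝓝[≠] 0) :=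
      tendsto_nhdsWithin_iff.2 ⟨slim, Eventually.of_forall fun k => (s0 k).ne'⟩
    have := this.comp h2
    refine this.congr fun k => ?_
    simp
  exact le_of_tendsto_of_tendsto' L1 L2 fun k => cut_tv hr (s0 k) hψ hψc hψ1

end BVaux

namespace BVaux
open scoped ENNReal NNReal Pointwise Convolution

lemma nrm1_eq (N : ℕ) (u : Euc N → ℝ) : nrm1 N u = (∫⁻ x, ‖u x‖ₑ).toReal := by
  rw [nrm1, eLpNorm_one_eq_lintegral_enorm]

lemma nrmq_eq (N : ℕ) {q : ℝ} (hq : 1 < q) (u : Euc N → ℝ) :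
    nrmq N q u ^ q = (∫⁻ x, ‖u x‖ₑ ^ q).toReal := by
  have h0 : q ≠ 0 := by linarith
  rw [nrmq, eLpNorm_eq_lintegral_rpow_enorm_toReal (by simp; linarith) (by simp),
    ENNReal.toReal_ofReal (by linarith), ENNReal.toReal_rpow, ← ENNReal.rpow_mul]
  simp [h0]

/-- The constant. -/
def EE (N : ℕ) (q : ℝ) : ℝ := (1 / ((N : ℝ) ^ (N - 1) * omegaS N)) ^ (q - 1)

lemma EE_base {N : ℕ} (hN : 2 ≤ N) : (N : ℝ) ^ (N - 1) * omegaS N = (N:ℝ) ^ N * kap N := by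
  obtain ⟨k, rfl⟩ : ∃ k, N = k + 1 := ⟨N - 1, by omega⟩
  simp only [omegaS, kap, Nat.add_sub_cancel]
  ring

lemma EE_nonneg (N : ℕ) (q : ℝ) : 0 ≤ EE N q := by
  unfold EE omegaS; positivity

lemma EE_mul {N : ℕ} (hN : 2 ≤ N) (q : ℝ) {V : ℝ} (hV : 0 ≤ V) :
    EE N q * V ^ ((q - 1) * (N:ℝ)) = (V ^ N / ((N:ℝ) ^ N * kap N)) ^ (q - 1) := by
  have hk := kap_pos N
  rw [EE, EE_base hN, mul_comm (q-1), Real.rpow_mul hV, Real.rpow_natCast,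
    ← Real.mul_rpow (by positivity) (by positivity)]
  congr 1; ring

lemma cN_pow {N : ℕ} (hN : 2 ≤ N) : cN N ^ N = (N:ℝ) ^ N * kap N := by
  have hk := kap_pos N
  rw [cN, mul_pow, ← Real.rpow_natCast (kap N ^ _), ← Real.rpow_mul hk.le]
  have : (N:ℝ) ≠ 0 := by positivity
  rw [one_div_mul_cancel this, Real.rpow_one]

lemma gn {N : ℕ} (hN : 2 ≤ N) {q : ℝ} (hq1 : 1 < q) (hq2 : q ≤ (N : ℝ) / ((N : ℝ) - 1))
    {u : Euc N → ℝ} (hu : MemBV N u) :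
    nrmq N q u ^ q ≤ EE N q * nrm1 N u ^ (q - (q-1)*N) * tv N u ^ ((q-1)*(N:ℝ)) := by
  have hN1 : (1:ℝ) < N := by exact_mod_cast (by omega : 1 < N)
  have hT : ∀ r ∈ TVSet N u, r ≤ tv N u := fun r hr => le_csSup hu.2 hr
  have hT0 := tv_nonneg hT
  have hS := sob_bv hN hu.1 hT
  have hc := cN_pos hN
  set T := tv N u
  have hθ : 0 ≤ q - (q-1)*N := by
    rw [le_div_iff₀ (by linarith)] at hq2
    nlinarith
  have hs : 0 ≤ (q-1)*((N:ℝ)-1) := mul_nonneg (by linarith) (by linarith)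
  have hm : AEMeasurable (fun x => ‖u x‖ₑ) := hu.1.aestronglyMeasurable.enorm
  have h1 := ENNReal.lintegral_mul_norm_pow_le (μ := volume) hm
    (hm.pow_const ((N:ℝ)/(N-1))) hθ hs (by ring)
  have h2 : ∫⁻ x, ‖u x‖ₑ ^ q = ∫⁻ x, ‖u x‖ₑ ^ (q - (q-1)*N) *
      (‖u x‖ₑ ^ ((N:ℝ)/(N-1))) ^ ((q-1)*((N:ℝ)-1)) := by
    refine lintegral_congr fun x => ?_
    rw [← ENNReal.rpow_mul, ← ENNReal.rpow_add_of_nonneg _ _ hθ]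
    · congr 1
      have : (N:ℝ) - 1 ≠ 0 := by linarith
      field_simp
      ring
    · exact mul_nonneg (div_nonneg (by linarith) (by linarith)) hs
  have h3 : ∫⁻ x, ‖u x‖ₑ ^ q ≤ (∫⁻ x, ‖u x‖ₑ) ^ (q - (q-1)*N) *
      ENNReal.ofReal (T / cN N) ^ ((q-1)*(N:ℝ)) := by
    rw [h2]
    refine h1.trans ?_
    gcongr
    refine (ENNReal.rpow_le_rpow hS hs).trans_eq ?_
    rw [← ENNReal.rpow_mul]
    congr 1
    have : (N:ℝ) - 1 ≠ 0 := by linarith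
    field_simp
  have hfin : ∫⁻ x, ‖u x‖ₑ ≠ ∞ := hu.1.2.ne
  have h4 := ENNReal.toReal_mono (ENNReal.mul_ne_top (ENNReal.rpow_ne_top_of_nonneg hθ hfin)
    (ENNReal.rpow_ne_top_of_nonneg (mul_nonneg (by linarith) (by linarith))
      ENNReal.ofReal_ne_top)) h3
  rw [nrmq_eq N hq1, nrm1_eq]
  refine h4.trans_eq ?_
  rw [ENNReal.toReal_mul, ← ENNReal.toReal_rpow, ← ENNReal.toReal_rpow,
    ENNReal.toReal_ofReal (by positivity), mul_right_comm, EE_mul hN q hT0, mul_comm,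
    mul_comm (q-1), Real.rpow_mul (by positivity), Real.rpow_natCast, div_pow, cN_pow hN]

/-- scaled ball function -/
def bf (N : ℕ) (r c : ℝ) : Euc N → ℝ := (Metric.closedBall (0 : Euc N) r).indicator fun _ => c

lemma bf_lint {N : ℕ} {r c : ℝ} (hr : 0 < r) (hc : 0 < c) {s : ℝ} (hs : 0 < s) :
    ∫⁻ x, ‖bf N r c x‖ₑ ^ s = ENNReal.ofReal (c ^ s * (r ^ N * kap N)) := by
  have : (fun x => ‖bf N r c x‖ₑ ^ s) =
      (Metric.closedBall (0 : Euc N) r).indicator fun _ => ENNReal.ofReal (c ^ s) := by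
    funext x
    by_cases hx : x ∈ Metric.closedBall (0 : Euc N) r
    · rw [bf, Set.indicator_of_mem hx, Set.indicator_of_mem hx,
        Real.enorm_of_nonneg hc.le, ENNReal.ofReal_rpow_of_pos hc]
    · rw [bf, Set.indicator_of_notMem hx, Set.indicator_of_notMem hx]
      simp [hs]
  rw [this, lintegral_indicator measurableSet_closedBall, setLIntegral_const, vol_cball _ hr,
    ← ENNReal.ofReal_mul (by positivity)]

lemma bf_int {N : ℕ} (r c : ℝ) : Integrable (bf N r c) := by
  rw [bf, integrable_indicator_iff measurableSet_closedBall]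
  exact integrableOn_const (hs := (isCompact_closedBall _ _).measure_lt_top.ne)

lemma bf_ub {N : ℕ} {r c : ℝ} (hr : 0 < r) (hc : 0 < c) :
    ∀ y ∈ TVSet N (bf N r c), y ≤ c * (N * r ^ (N - 1) * kap N) := by
  rintro y ⟨ψ, h1, h2, h3, rfl⟩
  have h := ball_tv_le hr h1 h2 h3
  have e : ∀ x, bf N r c x * (∑ i, fderiv ℝ (fun y => ψ y i) x (EuclideanSpace.single i 1)) =
      c * ((Metric.closedBall (0 : Euc N) r).indicator (fun _ => (1:ℝ)) x * dv ψ x) := by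
    intro x
    by_cases hx : x ∈ Metric.closedBall (0 : Euc N) r
    · rw [bf, Set.indicator_of_mem hx, Set.indicator_of_mem hx, one_mul]; rfl
    · rw [bf, Set.indicator_of_notMem hx, Set.indicator_of_notMem hx]; simp
  simp_rw [e]
  rw [integral_const_mul]
  exact mul_le_mul_of_nonneg_left h hc.le

lemma bf_bv {N : ℕ} {r c : ℝ} (hr : 0 < r) (hc : 0 < c) : MemBV N (bf N r c) :=
  ⟨bf_int r c, ⟨_, bf_ub hr hc⟩⟩

lemma tvset_zero_mem (N : ℕ) (u : Euc N → ℝ) : (0:ℝ) ∈ TVSet N u := by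
  refine ⟨0, contDiff_const, HasCompactSupport.zero, by simp, ?_⟩
  simp

lemma bf_nrm1 {N : ℕ} {r c : ℝ} (hr : 0 < r) (hc : 0 < c) :
    nrm1 N (bf N r c) = c * (r ^ N * kap N) := by
  have := bf_lint (N := N) hr hc one_pos
  have hk := kap_pos N
  simp only [ENNReal.rpow_one, Real.rpow_one] at this
  rw [nrm1_eq, this, ENNReal.toReal_ofReal (by positivity)]

lemma bf_nrmq {N : ℕ} {r c q : ℝ} (hr : 0 < r) (hc : 0 < c) (hq : 1 < q) :
    nrmq N q (bf N r c) ^ q = c ^ q * (r ^ N * kap N) := by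
  have hk := kap_pos N
  rw [nrmq_eq N hq, bf_lint hr hc (by linarith), ENNReal.toReal_ofReal (by positivity)]

lemma bf_tv {N : ℕ} (hN : 2 ≤ N) {r c : ℝ} (hr : 0 < r) (hc : 0 < c) :
    tv N (bf N r c) = c * (N * r ^ (N - 1) * kap N) := by
  have hN1 : (1:ℝ) < N := by exact_mod_cast (by omega : 1 < N)
  have hk := kap_pos N
  apply le_antisymm (csSup_le ⟨0, tvset_zero_mem _ _⟩ (bf_ub hr hc))
  have hT : ∀ y ∈ TVSet N (bf N r c), y ≤ tv N (bf N r c) :=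
    fun y hy => le_csSup (bf_bv hr hc).2 hy
  have hT0 := tv_nonneg hT
  have hS := sob_bv hN (bf_int r c) hT
  set T := tv N (bf N r c)
  have hcN := cN_pos hN
  have hp : 0 < (N:ℝ)/(N-1) := div_pos (by linarith) (by linarith)
  rw [bf_lint hr hc hp, ENNReal.ofReal_rpow_of_nonneg (by positivity) hp.le,
    ENNReal.ofReal_le_ofReal_iff (by positivity)] at hS
  have h1 := pow_le_pow_left₀ (by positivity) (Real.rpow_le_rpow (by positivity) hS
    (show (0:ℝ) ≤ ((N:ℝ)-1) / N by exact div_nonneg (by linarith) (by linarith))) N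
  have hNm : (N:ℝ) - 1 ≠ 0 := by linarith
  rw [← Real.rpow_mul (by positivity), show (N:ℝ)/(N-1) * ((N-1)/N) = 1 by field_simp,
    Real.rpow_one, div_pow, cN_pow hN, Real.mul_rpow (by positivity) (by positivity),
    ← Real.rpow_mul hc.le, show (N:ℝ)/(N-1) * ((N-1)/N) = 1 by field_simp,
    Real.rpow_one, mul_pow, ← Real.rpow_natCast ((r^N * kap N)^_),
    ← Real.rpow_mul (by positivity),
    show ((N:ℝ)-1)/N * N = ((N - 1 : ℕ):ℝ) by
      rw [Nat.cast_sub (by omega)]; field_simp; simp, Real.rpow_natCast,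
    le_div_iff₀ (by positivity)] at h1
  refine le_of_pow_le_pow_left₀ (n := N) (by omega) hT0 (le_of_eq_of_le ?_ h1)
  obtain ⟨k, rfl⟩ : ∃ k, N = k + 1 := ⟨N - 1, by omega⟩
  simp only [Nat.add_sub_cancel]
  ring

lemma bf_eq {N : ℕ} (hN : 2 ≤ N) {q : ℝ} (hq1 : 1 < q) {r c : ℝ} (hr : 0 < r) (hc : 0 < c) :
    nrmq N q (bf N r c) ^ q = EE N q * nrm1 N (bf N r c) ^ (q - (q-1)*N) *
      tv N (bf N r c) ^ ((q-1)*(N:ℝ)) := by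
  have hk := kap_pos N
  have hN0 : (0:ℝ) < N := by exact_mod_cast (by omega : 0 < N)
  rw [bf_nrmq hr hc hq1, bf_nrm1 hr hc, bf_tv hN hr hc, mul_right_comm,
    EE_mul hN q (by positivity)]
  have e : (c * (N * r ^ (N - 1) * kap N)) ^ N / ((N:ℝ) ^ N * kap N) =
      (c * (r ^ N * kap N)) ^ (N - 1) * c := by
    rw [div_eq_iff (by positivity)]
    obtain ⟨k, rfl⟩ : ∃ k, N = k + 1 := ⟨N - 1, by omega⟩
    simp only [Nat.add_sub_cancel]
    ring
  have hm : 0 < c * (r ^ N * kap N) := by positivity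
  rw [e, Real.mul_rpow (by positivity) hc.le, ← Real.rpow_natCast (c * (r ^ N * kap N)),
    ← Real.rpow_mul hm.le, mul_right_comm, ← Real.rpow_add hm, Nat.cast_sub (by omega)]
  rw [show ((N:ℝ) - (1:ℕ)) * (q-1) + (q - (q-1)*N) = 1 by push_cast; ring, Real.rpow_one,
    show q = (q - 1) + 1 by ring, Real.rpow_add hc, Real.rpow_one]
  simp only [add_sub_cancel_right]
  ring

lemma bf_exists {N : ℕ} (hN : 2 ≤ N) {m V : ℝ} (hm : 0 < m) (hV : 0 < V) :
    ∃ r c, 0 < r ∧ 0 < c ∧ nrm1 N (bf N r c) = m ∧ tv N (bf N r c) = V := by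
  have hk := kap_pos N
  have hN0 : (0:ℝ) < N := by exact_mod_cast (by omega : 0 < N)
  have hr : 0 < N * m / V := by positivity
  have hc : 0 < m / (kap N * (N * m / V) ^ N) := by positivity
  refine ⟨_, _, hr, hc, ?_, ?_⟩
  · rw [bf_nrm1 hr hc]; field_simp
  · rw [bf_tv hN hr hc]
    obtain ⟨k, rfl⟩ : ∃ k, N = k + 1 := ⟨N - 1, by omega⟩
    simp only [Nat.add_sub_cancel]
    rw [pow_succ]
    field_simp

lemma alg (N : ℕ) (q α a b m V K : ℝ) (ha : 0 < a) (hb : 0 < b) (hm : 0 < m)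
    (hV : 0 < V) (h : V ^ a + m ^ b = 1) :
    ((1 + V ^ a / m ^ b) ^ ((q-1)*((N:ℝ)/a - ((N:ℝ)-1)/b)) +
      α * K * (V ^ a / m ^ b) ^ ((q-1)*(N:ℝ)/a)) /
      (1 + V ^ a / m ^ b) ^ ((q-1)*(N:ℝ)/a + ((N:ℝ) - q*((N:ℝ)-1))/b) =
    m + α * (K * m ^ (q - (q-1)*N) * V ^ ((q-1)*(N:ℝ))) := by
  have hmb : 0 < m ^ b := Real.rpow_pos_of_pos hm b
  have e1 : 1 + V ^ a / m ^ b = m ^ (-b) := by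
    rw [Real.rpow_neg hm.le]; field_simp; linarith
  have e2 : V ^ a / m ^ b = V ^ a * m ^ (-b) := by
    rw [Real.rpow_neg hm.le]; rfl
  rw [e1, e2, add_div, Real.mul_rpow (by positivity) (by positivity),
    ← Real.rpow_mul hm.le, ← Real.rpow_mul hm.le, ← Real.rpow_mul hm.le, ← Real.rpow_mul hV.le,
    ← Real.rpow_sub hm]
  congr 1
  · rw [show -b * ((q-1)*((N:ℝ)/a - ((N:ℝ)-1)/b)) -
      -b * ((q-1)*(N:ℝ)/a + ((N:ℝ) - q*((N:ℝ)-1))/b) = 1 by field_simp; ring, Real.rpow_one]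
  · rw [show a * ((q-1)*(N:ℝ)/a) = (q-1)*(N:ℝ) by field_simp]
    rw [show α * K * (V ^ ((q-1)*(N:ℝ)) * m ^ (-b * ((q-1)*(N:ℝ)/a))) = α * K *
      V ^ ((q-1)*(N:ℝ)) * m ^ (-b * ((q-1)*(N:ℝ)/a)) by ring, mul_div_assoc, ← Real.rpow_sub hm,
      show -b * ((q-1)*(N:ℝ)/a) - -b * ((q-1)*(N:ℝ)/a + ((N:ℝ) - q*((N:ℝ)-1))/b) =
        q - (q-1)*N by field_simp; ring]
    ring

lemma nrm1_zero_iff {N : ℕ} {u : Euc N → ℝ} (hu : Integrable u) :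
    nrm1 N u = 0 ↔ u =ᵐ[volume] 0 := by
  rw [nrm1, ENNReal.toReal_eq_zero_iff, or_iff_left (memLp_one_iff_integrable.2 hu).2.ne,
    eLpNorm_eq_zero_iff hu.1 one_ne_zero]

lemma tv_zero_of_ae {N : ℕ} {u : Euc N → ℝ} (h : u =ᵐ[volume] 0) : tv N u = 0 := by
  have : TVSet N u = {0} := by
    apply Set.eq_singleton_iff_unique_mem.2 ⟨tvset_zero_mem _ _, ?_⟩
    rintro y ⟨ψ, -, -, -, rfl⟩
    rw [integral_eq_zero_of_ae]
    filter_upwards [h] with x hx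
    simp [hx]
  rw [tv, this, csSup_singleton]

lemma ae_zero_of_tv {N : ℕ} (hN : 2 ≤ N) {u : Euc N → ℝ} (hu : MemBV N u) (h : tv N u = 0) :
    u =ᵐ[volume] 0 := by
  have hN1 : (1:ℝ) < N := by exact_mod_cast (by omega : 1 < N)
  have hp : 0 < (N:ℝ)/(N-1) := div_pos (by linarith) (by linarith)
  have hS := sob_bv hN hu.1 (T := 0) (fun r hr => h ▸ le_csSup hu.2 hr)
  rw [zero_div, ENNReal.ofReal_zero, ENNReal.zero_rpow_of_pos hp, nonpos_iff_eq_zero,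
    lintegral_eq_zero_iff' (hu.1.aestronglyMeasurable.enorm.pow_const _)] at hS
  filter_upwards [hS] with x hx
  simpa [hp, hp.not_gt] using hx

end BVaux
open BVaux
/-- `D_α = sup_{t>0} f_α(t)`. -/
theorem Dalpha_eq_sup_falpha (N : ℕ) (hN : 2 ≤ N) (q : ℝ) (hq1 : 1 < q)
    (hq2 : q ≤ (N : ℝ) / ((N : ℝ) - 1)) (α a b : ℝ) (hα : 0 < α) (ha : 0 < a)
    (hb : 0 < b) :
    sSup { r | ∃ u : Euc N → ℝ, MemBV N u ∧ tv N u ^ a + nrm1 N u ^ b = 1 ∧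
        r = nrm1 N u + α * nrmq N q u ^ q } =
    sSup { r | ∃ t : ℝ, 0 < t ∧
        r = ((1+t) ^ ((q-1)*((N:ℝ)/a - ((N:ℝ)-1)/b)) +
              α * (1 / ((N : ℝ) ^ (N - 1) * omegaS N)) ^ (q - 1) * t ^ ((q-1)*(N:ℝ)/a)) /
            (1+t) ^ ((q-1)*(N:ℝ)/a + ((N:ℝ) - q*((N:ℝ)-1))/b) } := by
  have hθ : 0 ≤ q - (q-1)*N := by
    have hN1 : (1:ℝ) < N := by exact_mod_cast (by omega : 1 < N)
    rw [le_div_iff₀ (by linarith)] at hq2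
    nlinarith
  have hE0 := EE_nonneg N q
  change _ = sSup { r | ∃ t : ℝ, 0 < t ∧
        r = ((1+t) ^ ((q-1)*((N:ℝ)/a - ((N:ℝ)-1)/b)) +
              α * EE N q * t ^ ((q-1)*(N:ℝ)/a)) /
            (1+t) ^ ((q-1)*(N:ℝ)/a + ((N:ℝ) - q*((N:ℝ)-1))/b) }
  set A := { r | ∃ u : Euc N → ℝ, MemBV N u ∧ tv N u ^ a + nrm1 N u ^ b = 1 ∧
        r = nrm1 N u + α * nrmq N q u ^ q } with hA
  set B := { r | ∃ t : ℝ, 0 < t ∧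
        r = ((1+t) ^ ((q-1)*((N:ℝ)/a - ((N:ℝ)-1)/b)) +
              α * EE N q * t ^ ((q-1)*(N:ℝ)/a)) /
            (1+t) ^ ((q-1)*(N:ℝ)/a + ((N:ℝ) - q*((N:ℝ)-1))/b) } with hB
  -- the right-hand set in terms of pairs `(m, V)`
  have hBA : B ⊆ A := by
    rintro y ⟨t, ht, rfl⟩
    have hm : 0 < (1+t) ^ (-(1/b)) := by positivity
    have hV : 0 < (t/(1+t)) ^ (1/a) := by positivity
    have hmb : ((1+t) ^ (-(1/b))) ^ b = (1+t)⁻¹ := by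
      rw [← Real.rpow_mul (by positivity), show -(1/b) * b = -1 by field_simp,
        Real.rpow_neg_one]
    have hVa : ((t/(1+t)) ^ (1/a)) ^ a = t/(1+t) := by
      rw [← Real.rpow_mul (by positivity), one_div_mul_cancel ha.ne', Real.rpow_one]
    obtain ⟨r, c, hr, hc, h1, h2⟩ := bf_exists hN hm hV
    have hsum : tv N (bf N r c) ^ a + nrm1 N (bf N r c) ^ b = 1 := by
      rw [h1, h2, hmb, hVa]; field_simp; ring
    refine ⟨bf N r c, bf_bv hr hc, hsum, ?_⟩
    rw [bf_eq hN hq1 hr hc, ← alg N q α a b _ _ _ ha hb (h1 ▸ hm) (h2 ▸ hV) hsum, h1, h2, hmb, hVa,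
      show t/(1+t) / (1+t)⁻¹ = t by field_simp]
  have hle : ∀ y ∈ A, ∃ z ∈ B, y ≤ z ∧ z ≤ 1 + α * EE N q := by
    rintro y ⟨u, hu, hsum, rfl⟩
    have hm0 : 0 ≤ nrm1 N u := ENNReal.toReal_nonneg
    have hV0 : 0 ≤ tv N u := le_csSup hu.2 (tvset_zero_mem N u)
    have hne : ¬ u =ᵐ[volume] 0 := by
      intro h
      rw [(nrm1_zero_iff hu.1).2 h, tv_zero_of_ae h, Real.zero_rpow ha.ne',
        Real.zero_rpow hb.ne'] at hsum
      norm_num at hsum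
    have hm : 0 < nrm1 N u := lt_of_le_of_ne hm0 fun h => hne ((nrm1_zero_iff hu.1).1 h.symm)
    have hV : 0 < tv N u := lt_of_le_of_ne hV0 fun h => hne (ae_zero_of_tv hN hu h.symm)
    have hVa : 0 < tv N u ^ a := by positivity
    have hmb : 0 < nrm1 N u ^ b := by positivity
    have hm1 : nrm1 N u ≤ 1 := by
      by_contra! h
      have := Real.one_lt_rpow h hb
      linarith
    have hV1 : tv N u ≤ 1 := by
      by_contra! h
      have := Real.one_lt_rpow h ha
      linarith
    refine ⟨_, ⟨tv N u ^ a / nrm1 N u ^ b, by positivity, rfl⟩, ?_⟩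
    rw [alg N q α a b _ _ _ ha hb hm hV hsum]
    have g := gn hN hq1 hq2 hu
    constructor
    · gcongr
    · have p1 : nrm1 N u ^ (q - (q-1)*N) ≤ 1 := Real.rpow_le_one hm0 hm1 hθ
      have p2 : tv N u ^ ((q-1)*(N:ℝ)) ≤ 1 :=
        Real.rpow_le_one hV0 hV1 (mul_nonneg (by linarith) (Nat.cast_nonneg _))
      have p3 : EE N q * nrm1 N u ^ (q - (q-1)*N) * tv N u ^ ((q-1)*(N:ℝ)) ≤ EE N q * 1 * 1 := by
        gcongr
      rw [mul_one, mul_one] at p3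
      gcongr
  have hBne : B.Nonempty := ⟨_, 1, one_pos, rfl⟩
  have hAb : BddAbove A := ⟨1 + α * EE N q, fun y hy => by
    obtain ⟨z, -, h1, h2⟩ := hle y hy
    exact h1.trans h2⟩
  apply le_antisymm
  · refine csSup_le (hBne.mono hBA) fun y hy => ?_
    obtain ⟨z, hz, h1, -⟩ := hle y hy
    exact h1.trans (le_csSup (hAb.mono hBA) hz)
  · exact csSup_le_csSup hAb hBne hBA
end
end
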